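/- arXiv:1305.0353 — 2 statements merged into one kernel-verified Lean document; each statement's English description precedes it below -/
import Mathlib

section
/- For each 1 ≤ i ≤ n−1 the polynomial det A_i(λ) has exactly i distinct positive real roots; let λ^{(i)} denote the smallest, and set λ^{(0)} := ∞. For λ > 0 let φ_λ be the function on V with φ_λ(1) = −1 satisfying the positive-part recursion with parameter λ, and set T_i(λ) = Σ_{j=1}^{i} φ_λ(j) π(j). Then: (1) λ^G_{π,ν} = λ^{(n−1)} < λ^{(n−2)} < ⋯ < λ^{(1)}; (2) for 1 ≤ i ≤ n−2 and λ ∈ [λ^{(i)}, λ^{(i−1)}), one has φ_λ(i) < φ_λ(i+1) = φ_λ(i+2); (3) φ_λ(n−1) < φ_λ(n) for λ ∈ (0, λ^{(n−2)}). Moreover, for 1 ≤ i ≤ n−1, T_{i+1}(λ) = −π(1) det A_i(λ) for all λ ∈ (0, λ^{(i−1)}), and (λ − λ^{(i)}) T_{i+1}(λ) > 0 for all λ ∈ (0, λ^{(i)}) ∪ (λ^{(i)}, ∞). -/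
open Finset

/-- Dirichlet form on the path with vertices `{1,…,n}`;
`ν i` denotes the weight of edge `{i, i+1}`. -/
noncomputable def EForm (n : ℕ) (ν : ℕ → ℝ) (f g : ℕ → ℝ) : ℝ :=
  ∑ i ∈ Finset.Icc 1 (n - 1), (f i - f (i + 1)) * (g i - g (i + 1)) * ν i

/-- Mean of `f` with respect to `π` on `{1,…,n}`. -/
noncomputable def piMean (n : ℕ) (π : ℕ → ℝ) (f : ℕ → ℝ) : ℝ :=
  ∑ i ∈ Finset.Icc 1 n, f i * π i

/-- Variance of `f` with respect to `π` on `{1,…,n}`. -/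
noncomputable def varPi (n : ℕ) (π : ℕ → ℝ) (f : ℕ → ℝ) : ℝ :=
  piMean n π (fun i => (f i) ^ 2) - (piMean n π f) ^ 2

/-- `f` is non-constant on `{1,…,n}`. -/
def Nonconstant (n : ℕ) (f : ℕ → ℝ) : Prop :=
  ∃ i ∈ Finset.Icc 1 n, ∃ j ∈ Finset.Icc 1 n, f i ≠ f j

/-- `lam` is the spectral gap: the minimum of the Rayleigh quotients over
non-constant functions. -/
def IsSpectralGap (n : ℕ) (π ν : ℕ → ℝ) (lam : ℝ) : Prop :=
  IsLeast {r : ℝ | ∃ f : ℕ → ℝ, Nonconstant n f ∧ r = EForm n ν f f / varPi n π f} lam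

/-- The positive-part recursion with parameter `lam`:
`ψ(i+1) = ψ(i) + max{[ψ(i)−ψ(i−1)]ν(i−1,i) − λ π(i) ψ(i), 0}/ν(i,i+1)` for `1 ≤ i < n`. -/
def PosPartRec (n : ℕ) (π ν : ℕ → ℝ) (lam : ℝ) (ψ : ℕ → ℝ) : Prop :=
  ∀ i, 1 ≤ i → i < n →
    ψ (i + 1) = ψ i + max ((ψ i - ψ (i - 1)) * ν (i - 1) - lam * (π i * ψ i)) 0 / ν i

/-- The `i × i` tridiagonal matrix `A_i(λ)` with diagonal entries
`a_k(λ) = 1 + π(k+1)/π(k) − λ π(k+1)/ν(k,k+1)`, superdiagonal entries `1`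
and subdiagonal entries `π(k+2)/π(k+1)`. -/
noncomputable def Amat (π ν : ℕ → ℝ) (i : ℕ) (lam : ℝ) : Matrix (Fin i) (Fin i) ℝ :=
  Matrix.of fun r c =>
    if (r : ℕ) = (c : ℕ) then
      1 + π ((r : ℕ) + 2) / π ((r : ℕ) + 1) - lam * π ((r : ℕ) + 2) / ν ((r : ℕ) + 1)
    else if (c : ℕ) = (r : ℕ) + 1 then 1
    else if (r : ℕ) = (c : ℕ) + 1 then π ((r : ℕ) + 2) / π ((r : ℕ) + 1)
    else 0

/-!
Expanding along the last row, `D_i := det A_i` satisfies a three-term recurrence in `i` whose last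
coefficient is negative, so (Sturm) the roots of `D_i` and `D_{i+1}` are real, simple and strictly
interlace; they are positive because `D_i` is positive and nondecreasing in `i` when `λ ≤ 0`.

Summing the eigenvalue equation up to the vertex `k` gives
`[f(k) - f(k+1)] ν(k,k+1) = λ T_k` with `T_k = ∑_{j ≤ k} f(j) π(j)`, and then the partial masses
`T_{k+1}` obey the recurrence of the `D_k`: `T_{k+1} = f(1) π(1) D_k`. An eigenfunction has
`T_n = 0`, so the eigenvalues are the roots of `D_{n-1}` and the gap is the smallest of them.

The positive part does not act as long as `T_k ≤ 0`. Hence `φ_λ` solves the same equation up to the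
first index `i` with `D_i(λ) ≤ 0`, which is the `i` with `λ^{(i)} ≤ λ < λ^{(i-1)}`; from then on
`φ_λ` is positive and nondecreasing, so that the partial masses stay positive.
-/

section Tridiagonal

variable {R : Type*} [CommRing R]

/-- The `m × m` tridiagonal matrix with diagonal entries `a k`, superdiagonal entries `b k` at
`(k, k + 1)` and subdiagonal entries `c k` at `(k + 1, k)`, indices starting from `0`. -/
def tridiagonal (a b c : ℕ → R) (m : ℕ) : Matrix (Fin m) (Fin m) R :=
  Matrix.of fun r s =>
    if (r : ℕ) = s then a r else if (s : ℕ) = r + 1 then b r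
    else if (r : ℕ) = s + 1 then c s else 0

theorem det_tridiagonal_one (a b c : ℕ → R) : (tridiagonal a b c 1).det = a 0 := by
  simp [tridiagonal]

theorem det_tridiagonal_submatrix_last (a b c : ℕ → R) (m : ℕ) :
    ((tridiagonal a b c (m + 2)).submatrix Fin.castSucc (Fin.last m).castSucc.succAbove).det =
      b m * (tridiagonal a b c m).det := by
  have hlast : (Fin.last m).castSucc.succAbove (Fin.last m) = Fin.last (m + 1) := by
    simp [Fin.succAbove]
  have hminor : ((tridiagonal a b c (m + 2)).submatrix Fin.castSucc
      (Fin.last m).castSucc.succAbove).submatrix Fin.castSucc Fin.castSucc =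
        tridiagonal a b c m := by
    ext r s
    have hs : (Fin.last m).castSucc.succAbove s.castSucc = s.castSucc.castSucc := by
      simp [Fin.succAbove, Fin.lt_def]
    simp [tridiagonal, hs]
  have hcol (r : Fin m) : tridiagonal a b c (m + 2) r.castSucc.castSucc (Fin.last (m + 1)) = 0 := by
    simp only [tridiagonal, Matrix.of_apply, Fin.val_castSucc, Fin.val_last]
    grind
  have hcorner : tridiagonal a b c (m + 2) (Fin.last m).castSucc (Fin.last (m + 1)) = b m := by
    simp [tridiagonal]
  rw [Matrix.det_succ_column _ (Fin.last m), Fin.sum_univ_castSucc]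
  simp only [Matrix.submatrix_apply, hlast, hcol, hcorner, Fin.succAbove_last, hminor, mul_zero,
    zero_mul, Finset.sum_const_zero, zero_add, Fin.val_last, Even.add_self, Even.neg_one_pow,
    one_mul]

theorem det_tridiagonal_succ_succ (a b c : ℕ → R) (m : ℕ) :
    (tridiagonal a b c (m + 2)).det =
      a (m + 1) * (tridiagonal a b c (m + 1)).det - b m * c m * (tridiagonal a b c m).det := by
  have hminor : (tridiagonal a b c (m + 2)).submatrix Fin.castSucc Fin.castSucc =
      tridiagonal a b c (m + 1) := by
    ext r s
    simp [tridiagonal]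
  have hrow (s : Fin m) : tridiagonal a b c (m + 2) (Fin.last (m + 1)) s.castSucc.castSucc = 0 := by
    simp only [tridiagonal, Matrix.of_apply, Fin.val_castSucc, Fin.val_last]
    grind
  have hsub : tridiagonal a b c (m + 2) (Fin.last (m + 1)) (Fin.last m).castSucc = c m := by
    simp only [tridiagonal, Matrix.of_apply, Fin.val_castSucc, Fin.val_last]
    grind
  have hdiag : tridiagonal a b c (m + 2) (Fin.last (m + 1)) (Fin.last (m + 1)) = a (m + 1) := by
    simp [tridiagonal]
  rw [Matrix.det_succ_row _ (Fin.last (m + 1)), Fin.sum_univ_castSucc, Fin.sum_univ_castSucc]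
  simp only [hrow, hsub, hdiag, Fin.succAbove_last, hminor, det_tridiagonal_submatrix_last,
    mul_zero, zero_mul, Finset.sum_const_zero, zero_add, Fin.val_last, Fin.val_castSucc,
    Even.add_self, Even.neg_one_pow, one_mul, Odd.neg_one_pow (⟨m, by ring⟩ : Odd (m + 1 + m))]
  ring

end Tridiagonal

section Interlacing

open Polynomial

variable {m : ℕ}

/-- The roots `x` and `y` of two polynomials of degrees `m` and `m + 1` strictly interlace:
`y 0 < x 0 < y 1 < ⋯ < x (m - 1) < y m`. -/
def Interlaces (x : Fin m → ℝ) (y : Fin (m + 1) → ℝ) : Prop :=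
  ∀ k, y k.castSucc < x k ∧ x k < y k.succ

/-- `f` is the polynomial function with roots `x`, normalized to be positive to the left of all
of them. -/
def HasRootFactorization (f : ℝ → ℝ) (x : Fin m → ℝ) : Prop :=
  ∃ c > 0, ∀ l, f l = c * ∏ k, (x k - l)

theorem Interlaces.strictMono_right {x : Fin m → ℝ} {y : Fin (m + 1) → ℝ} (h : Interlaces x y) :
    StrictMono y :=
  Fin.strictMono_iff_lt_succ.2 fun k => (h k).1.trans (h k).2

theorem Interlaces.strictMono_left {x : Fin m → ℝ} {y : Fin (m + 1) → ℝ} (h : Interlaces x y) :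
    StrictMono x := fun j k hjk =>
  calc x j < y j.succ := (h j).2
    _ ≤ y k.castSucc := h.strictMono_right.monotone (Fin.succ_le_castSucc_iff.2 hjk)
    _ < x k := (h k).1

theorem HasRootFactorization.eq_zero_iff {f : ℝ → ℝ} {x : Fin m → ℝ}
    (h : HasRootFactorization f x) {l : ℝ} : f l = 0 ↔ l ∈ Set.range x := by
  obtain ⟨c, hc, hf⟩ := h
  simp [hf, hc.ne', Finset.prod_eq_zero_iff, sub_eq_zero]

theorem HasRootFactorization.isLeast {f : ℝ → ℝ} {x : Fin (m + 1) → ℝ}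
    (h : HasRootFactorization f x) (hx : Monotone x) : IsLeast {l | f l = 0} (x 0) := by
  refine ⟨h.eq_zero_iff.2 ⟨0, rfl⟩, fun l hl => ?_⟩
  obtain ⟨k, rfl⟩ := h.eq_zero_iff.1 hl
  exact hx (Fin.zero_le k)

theorem HasRootFactorization.sign {f : ℝ → ℝ} {x : Fin m → ℝ} (h : HasRootFactorization f x)
    {l : ℝ} {k : ℕ} (hk : k ≤ m) (hlt : ∀ j : Fin m, (j : ℕ) < k → x j < l)
    (hgt : ∀ j : Fin m, k ≤ j → l < x j) : 0 < (-1) ^ k * f l := by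
  obtain ⟨c, hc, hf⟩ := h
  have hpow : ∏ j : Fin m, (if (j : ℕ) < k then (-1 : ℝ) else 1) = (-1) ^ k := by
    rw [Finset.prod_ite]
    simp [Fin.card_filter_val_lt, hk]
  have hprod : 0 < ∏ j : Fin m, (if (j : ℕ) < k then (-1 : ℝ) else 1) * (x j - l) := by
    refine Finset.prod_pos fun j _ => ?_
    split_ifs with hj
    · linarith [hlt j hj]
    · linarith [hgt j (not_lt.1 hj)]
  rw [Finset.prod_mul_distrib, hpow] at hprod
  rw [hf]
  linarith [mul_pos hc hprod]

theorem HasRootFactorization.pos {f : ℝ → ℝ} {x : Fin m → ℝ} (h : HasRootFactorization f x) {l : ℝ}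
    (hl : ∀ j, l < x j) : 0 < f l := by
  simpa using h.sign (Nat.zero_le m) (by simp) fun j _ => hl j

theorem HasRootFactorization.sign_of_interlaces {f : ℝ → ℝ} {x : Fin m → ℝ}
    {y : Fin (m + 1) → ℝ} (h : HasRootFactorization f x) (hxy : Interlaces x y)
    (k : Fin (m + 1)) : 0 < (-1) ^ (k : ℕ) * f (y k) :=
  h.sign k.is_le
    (fun j hj => (hxy j).2.trans_le (hxy.strictMono_right.monotone (Nat.succ_le_of_lt hj)))
    fun j hj => (hxy.strictMono_right.monotone hj).trans_lt (hxy j).1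

theorem exists_interlaces_of_alternating {f : ℝ → ℝ} (hf : Continuous f)
    {w : Fin (m + 1) → ℝ} (hw : StrictMono w)
    (hsign : ∀ k : Fin (m + 1), 0 < (-1) ^ (k : ℕ) * f (w k)) :
    ∃ z : Fin m → ℝ, Interlaces z w ∧ ∀ k, f (z k) = 0 := by
  have hroot (k : Fin m) : ∃ z ∈ Set.Ioo (w k.castSucc) (w k.succ), f z = 0 := by
    have hleft := hsign k.castSucc
    have hright := hsign k.succ
    rw [Fin.val_succ, pow_succ] at hright
    obtain ⟨z, hz, hfz⟩ := intermediate_value_Ioo' (hw k.castSucc_lt_succ).le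
      (f := fun z => (-1) ^ (k : ℕ) * f z) (by fun_prop) ⟨by linarith, hleft⟩
    exact ⟨z, hz, by simpa using hfz⟩
  choose z hz hfz using hroot
  exact ⟨z, hz, hfz⟩

theorem eq_C_coeff_mul_prod_X_sub_C {K : Type*} [Field K] {p : K[X]} (hp : p.natDegree ≤ m)
    {x : Fin m → K} (hx : Function.Injective x) (hroot : ∀ k, p.IsRoot (x k)) :
    p = C (p.coeff m) * ∏ k, (X - C (x k)) := by
  rw [← Lagrange.nodal_eq]
  have hcoeff : (Lagrange.nodal univ x).coeff m = 1 := by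
    simpa using (Lagrange.nodal_monic (s := univ) (v := x)).coeff_natDegree
  refine eq_of_degree_sub_lt_of_eval_index_eq univ hx.injOn ?_ fun k _ => ?_
  · rw [Finset.card_univ, Fintype.card_fin, degree_lt_iff_coeff_zero]
    intro j hj
    rcases hj.eq_or_lt with rfl | hj
    · simp [hcoeff]
    · have hnodal : (Lagrange.nodal univ x).natDegree < j := by simpa using hj
      simp [coeff_eq_zero_of_natDegree_lt (hp.trans_lt hj), coeff_eq_zero_of_natDegree_lt hnodal]
  · rw [(hroot k).eq_zero, eval_mul, Lagrange.eval_nodal_at_node (Finset.mem_univ k), mul_zero]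

theorem hasRootFactorization_eval {p : ℝ[X]} (hp : p.natDegree ≤ m)
    (hlead : 0 < (-1) ^ m * p.coeff m) {x : Fin m → ℝ} (hx : Function.Injective x)
    (hroot : ∀ k, p.eval (x k) = 0) : HasRootFactorization (fun l => p.eval l) x := by
  refine ⟨_, hlead, fun l => ?_⟩
  have hneg : ∏ k, (x k - l) = (-1) ^ m * ∏ k, (l - x k) := by
    simp_rw [← neg_sub l, Finset.prod_neg, Finset.card_univ, Fintype.card_fin]
  have hsq : ((-1 : ℝ) ^ m) * (-1) ^ m = 1 := by rw [← mul_pow]; simp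
  conv_lhs => rw [eq_C_coeff_mul_prod_X_sub_C hp hx hroot]
  simp only [eval_mul, eval_C, eval_prod, eval_sub, eval_X, hneg]
  linear_combination (-p.coeff m * ∏ k, (l - x k)) * hsq

theorem exists_gt_eval_pos {p : ℝ[X]} (hp : p.natDegree ≤ m + 1) (hlead : 0 < p.coeff (m + 1))
    (a : ℝ) : ∃ v > a, 0 < p.eval v := by
  have hdeg : p.natDegree = m + 1 := le_antisymm hp (le_natDegree_of_ne_zero hlead.ne')
  have htop : Filter.Tendsto (fun v => p.eval v) Filter.atTop Filter.atTop :=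
    tendsto_atTop_of_leadingCoeff_nonneg p (natDegree_pos_iff_degree_pos.1 (by omega))
      (by rw [leadingCoeff, hdeg]; exact hlead.le)
  exact ((Filter.eventually_gt_atTop a).and (htop.eventually_gt_atTop 0)).exists

theorem exists_lt_eval_pos {p : ℝ[X]} (hp : p.natDegree ≤ m + 1)
    (hlead : 0 < (-1) ^ (m + 1) * p.coeff (m + 1)) (a : ℝ) : ∃ u < a, 0 < p.eval u := by
  obtain ⟨v, hv, hpv⟩ := exists_gt_eval_pos (p := p.comp (C (-1) * X)) (m := m)
    (by simpa [natDegree_comp] using hp)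
    (by rwa [comp_C_mul_X_coeff, mul_comm]) (-a)
  exact ⟨-v, by linarith, by simpa using hpv⟩

theorem exists_interlaces_hasRootFactorization {p : ℝ[X]} (hp : p.natDegree ≤ m + 1)
    (hlead : 0 < (-1) ^ (m + 1) * p.coeff (m + 1)) {y : Fin m → ℝ} (hy : StrictMono y)
    (hsign : ∀ k : Fin m, 0 < (-1) ^ ((k : ℕ) + 1) * p.eval (y k)) :
    ∃ z : Fin (m + 1) → ℝ, Interlaces y z ∧ HasRootFactorization (fun l => p.eval l) z := by
  obtain ⟨a, ha⟩ := (Set.finite_range y).bddBelow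
  obtain ⟨b, hb⟩ := (Set.finite_range y).bddAbove
  obtain ⟨u, hu, hpu⟩ := exists_lt_eval_pos hp hlead a
  obtain ⟨v, hv, hpv⟩ := exists_gt_eval_pos (p := C ((-1) ^ (m + 1)) * p)
    ((natDegree_C_mul_le _ _).trans hp) (by rwa [coeff_C_mul]) (max u b)
  have huy (k) : u < y k := hu.trans_le (ha ⟨k, rfl⟩)
  have hyv (k) : y k < v := (hb ⟨k, rfl⟩).trans_lt ((le_max_right u b).trans_lt hv)
  let w : Fin (m + 2) → ℝ := Fin.cons u (Fin.snoc y v)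
  have hw : StrictMono w := by
    have hsnoc : StrictMono (Fin.snoc y v : Fin (m + 1) → ℝ) := by
      intro j k
      cases j using Fin.lastCases <;> cases k using Fin.lastCases <;>
        simp [hyv, hy.lt_iff_lt, Fin.le_last]
    have husnoc (k : Fin (m + 1)) : u < (Fin.snoc y v : Fin (m + 1) → ℝ) k := by
      cases k using Fin.lastCases <;> simp [huy, (le_max_left u b).trans_lt hv]
    intro j k
    cases j using Fin.cases <;> cases k using Fin.cases <;> simp [w, husnoc, hsnoc.lt_iff_lt]
  have halt : ∀ k : Fin (m + 2), 0 < (-1) ^ (k : ℕ) * p.eval (w k) := by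
    refine Fin.cases (by simpa [w] using hpu) (Fin.lastCases ?_ fun k => ?_)
    · simpa [w] using hpv
    · simpa [w] using hsign k
  obtain ⟨z, hzw, hz⟩ := exists_interlaces_of_alternating p.continuous hw halt
  have hyz : Interlaces y z := fun k => by
    have hk : w k.succ.castSucc = y k := by simp [w]
    exact ⟨hk ▸ (hzw k.castSucc).2, hk ▸ (hzw k.succ).1⟩
  exact ⟨z, hyz, hasRootFactorization_eval hp hlead hyz.strictMono_right.injective hz⟩

end Interlacing

section TridiagonalPencil

open Polynomial

variable {R : Type*} [CommRing R] (α β γ : ℕ → R)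

/-- The determinant, as a polynomial in `X`, of the `i × i` tridiagonal matrix with diagonal
entries `α k - β k * X`, superdiagonal entries `1` and subdiagonal entries `γ k`. -/
noncomputable def tridiagonalDetPoly (i : ℕ) : R[X] :=
  (tridiagonal (fun k => C (α k) - C (β k) * X) (fun _ => 1) (fun k => C (γ k)) i).det

theorem eval_tridiagonalDetPoly (i : ℕ) (l : R) :
    (tridiagonalDetPoly α β γ i).eval l =
      (tridiagonal (fun k => α k - β k * l) (fun _ => 1) γ i).det := by
  rw [tridiagonalDetPoly, ← coe_evalRingHom, RingHom.map_det]
  congr 1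
  ext r s
  simp only [tridiagonal, RingHom.mapMatrix_apply, Matrix.map_apply, Matrix.of_apply]
  split_ifs <;> simp

theorem tridiagonalDetPoly_succ_succ (i : ℕ) :
    tridiagonalDetPoly α β γ (i + 2) =
      (C (α (i + 1)) - C (β (i + 1)) * X) * tridiagonalDetPoly α β γ (i + 1) -
        C (γ i) * tridiagonalDetPoly α β γ i := by
  simp [tridiagonalDetPoly, det_tridiagonal_succ_succ]

theorem natDegree_tridiagonalDetPoly_le (i : ℕ) : (tridiagonalDetPoly α β γ i).natDegree ≤ i := by
  induction i using Nat.twoStepInduction with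
  | zero => simp [tridiagonalDetPoly]
  | one =>
    rw [tridiagonalDetPoly, det_tridiagonal_one]
    compute_degree
  | more i h₀ h₁ =>
    rw [tridiagonalDetPoly_succ_succ]
    have hlin : (C (α (i + 1)) - C (β (i + 1)) * X).natDegree ≤ 1 := by compute_degree
    refine (natDegree_sub_le _ _).trans (max_le ?_ ?_)
    · exact (natDegree_mul_le_of_le hlin h₁).trans (by omega)
    · exact (natDegree_C_mul_le _ _).trans (h₀.trans (by omega))

theorem coeff_tridiagonalDetPoly (i : ℕ) :
    (tridiagonalDetPoly α β γ i).coeff i = ∏ k ∈ range i, -β k := by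
  induction i using Nat.twoStepInduction with
  | zero => simp [tridiagonalDetPoly]
  | one =>
    rw [tridiagonalDetPoly, det_tridiagonal_one]
    simp
  | more i _ h₁ =>
    have hdeg (j : ℕ) (hj : j ≤ i + 1) : (tridiagonalDetPoly α β γ j).coeff (i + 2) = 0 :=
      coeff_eq_zero_of_natDegree_lt
        ((natDegree_tridiagonalDetPoly_le α β γ j).trans_lt (by omega))
    rw [tridiagonalDetPoly_succ_succ, sub_mul, mul_assoc, coeff_sub, coeff_sub, coeff_C_mul,
      coeff_C_mul, coeff_C_mul, coeff_X_mul, h₁, hdeg _ le_rfl, hdeg _ i.le_succ,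
      prod_range_succ _ (i + 1)]
    ring

end TridiagonalPencil

section TridiagonalPencilReal

variable {α β γ : ℕ → ℝ} {i : ℕ}

theorem coeff_tridiagonalDetPoly_sign (hβ : ∀ k < i, 0 < β k) :
    0 < (-1) ^ i * (tridiagonalDetPoly α β γ i).coeff i := by
  rw [coeff_tridiagonalDetPoly, prod_neg, card_range, ← mul_assoc, ← mul_pow]
  simpa using prod_pos fun k hk => hβ k (mem_range.1 hk)

theorem tridiagonalDetPoly_eval_sign_of_interlaces (hγ : 0 < γ i) {x : Fin i → ℝ}
    {y : Fin (i + 1) → ℝ} (hxy : Interlaces x y)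
    (hx : HasRootFactorization (fun l => (tridiagonalDetPoly α β γ i).eval l) x)
    (hy : HasRootFactorization (fun l => (tridiagonalDetPoly α β γ (i + 1)).eval l) y)
    (k : Fin (i + 1)) :
    0 < (-1) ^ ((k : ℕ) + 1) * (tridiagonalDetPoly α β γ (i + 2)).eval (y k) := by
  have hroot : (tridiagonalDetPoly α β γ (i + 1)).eval (y k) = 0 := hy.eq_zero_iff.2 ⟨k, rfl⟩
  have heval : (tridiagonalDetPoly α β γ (i + 2)).eval (y k) =
      -(γ i * (tridiagonalDetPoly α β γ i).eval (y k)) := by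
    simp [tridiagonalDetPoly_succ_succ, hroot]
  rw [heval, pow_succ]
  linarith [mul_pos hγ (hx.sign_of_interlaces hxy k)]

theorem exists_interlaces_tridiagonalDetPoly (hβ : ∀ k < i + 1, 0 < β k) (hγ : ∀ k < i, 0 < γ k) :
    ∃ (x : Fin i → ℝ) (y : Fin (i + 1) → ℝ), Interlaces x y ∧
      HasRootFactorization (fun l => (tridiagonalDetPoly α β γ i).eval l) x ∧
      HasRootFactorization (fun l => (tridiagonalDetPoly α β γ (i + 1)).eval l) y := by
  induction i with
  | zero =>
    have hβ₀ : 0 < β 0 := hβ 0 one_pos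
    refine ⟨Fin.elim0, fun _ => α 0 / β 0, fun k => k.elim0, ⟨1, one_pos, fun l => ?_⟩,
      ⟨β 0, hβ₀, fun l => ?_⟩⟩
    · simp [eval_tridiagonalDetPoly]
    · simp only [zero_add, eval_tridiagonalDetPoly, det_tridiagonal_one, Fin.prod_const,
        pow_one]
      field_simp
  | succ i ih =>
    obtain ⟨x, y, hxy, hx, hy⟩ :=
      ih (fun k hk => hβ k (by omega)) (fun k hk => hγ k (by omega))
    obtain ⟨z, hyz, hz⟩ := exists_interlaces_hasRootFactorization
      (natDegree_tridiagonalDetPoly_le α β γ (i + 2)) (coeff_tridiagonalDetPoly_sign hβ)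
      hxy.strictMono_right
      (tridiagonalDetPoly_eval_sign_of_interlaces (hγ i i.lt_succ_self) hxy hx hy)
    exact ⟨y, z, hyz, hy, hz⟩

end TridiagonalPencilReal

/-- Positive vertex weights `π 1, …, π n` and positive edge weights `ν 1, …, ν (n - 1)` on the
path `{1, …, n}`. -/
structure PosWeights (n : ℕ) (π ν : ℕ → ℝ) : Prop where
  vertex_pos : ∀ k, 1 ≤ k → k ≤ n → 0 < π k
  edge_pos : ∀ k, 1 ≤ k → k < n → 0 < ν k

/-- The smallest root `λ^{(i)}` of `det A_i`. -/
noncomputable def detRoot (π ν : ℕ → ℝ) (i : ℕ) : ℝ :=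
  sInf {l | (Amat π ν i l).det = 0}

/-- The condition `lam < λ^{(i - 1)}` on the smallest roots of the `det A_i`, where
`λ^{(0)} = ∞`. -/
def LtPrevRoot (π ν : ℕ → ℝ) (i : ℕ) (lam : ℝ) : Prop :=
  i = 1 ∨ lam < detRoot π ν (i - 1)

section Amat

variable {n i : ℕ} {π ν : ℕ → ℝ} {lam : ℝ}

theorem Amat_eq_tridiagonal (π ν : ℕ → ℝ) (i : ℕ) (lam : ℝ) :
    Amat π ν i lam =
      tridiagonal (fun k => 1 + π (k + 2) / π (k + 1) - lam * π (k + 2) / ν (k + 1))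
        (fun _ => 1) (fun k => π (k + 3) / π (k + 2)) i := by
  ext r s
  simp only [Amat, tridiagonal, Matrix.of_apply]
  split_ifs with _ _ h
  · rfl
  · rfl
  · rw [h]
  · rfl

theorem det_Amat_zero (π ν : ℕ → ℝ) (lam : ℝ) : (Amat π ν 0 lam).det = 1 :=
  Matrix.det_isEmpty

theorem det_Amat_one (π ν : ℕ → ℝ) (lam : ℝ) :
    (Amat π ν 1 lam).det = 1 + π 2 / π 1 - lam * π 2 / ν 1 := by
  rw [Amat_eq_tridiagonal, det_tridiagonal_one]

theorem det_Amat_succ_succ (π ν : ℕ → ℝ) (i : ℕ) (lam : ℝ) :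
    (Amat π ν (i + 2) lam).det =
      (1 + π (i + 3) / π (i + 2) - lam * π (i + 3) / ν (i + 2)) * (Amat π ν (i + 1) lam).det -
        π (i + 3) / π (i + 2) * (Amat π ν i lam).det := by
  simp only [Amat_eq_tridiagonal, det_tridiagonal_succ_succ, one_mul]

theorem det_Amat_eq_eval (π ν : ℕ → ℝ) (i : ℕ) (lam : ℝ) :
    (Amat π ν i lam).det =
      (tridiagonalDetPoly (fun k => 1 + π (k + 2) / π (k + 1)) (fun k => π (k + 2) / ν (k + 1))
        (fun k => π (k + 3) / π (k + 2)) i).eval lam := by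
  rw [eval_tridiagonalDetPoly, Amat_eq_tridiagonal]
  simp only [mul_comm lam, div_mul_eq_mul_div]

namespace PosWeights

theorem vertex_pos_of_mem_Icc (h : PosWeights n π ν) : ∀ k ∈ Icc 1 n, 0 < π k := fun k hk =>
  h.vertex_pos k (mem_Icc.1 hk).1 (mem_Icc.1 hk).2

theorem edge_nonneg (h : PosWeights n π ν) : ∀ k, 1 ≤ k → k < n → 0 ≤ ν k := fun k hk₁ hk =>
  (h.edge_pos k hk₁ hk).le

theorem exists_interlaces_det_Amat (h : PosWeights n π ν) (hi : i + 1 < n) :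
    ∃ (x : Fin i → ℝ) (y : Fin (i + 1) → ℝ), Interlaces x y ∧
      HasRootFactorization (fun l => (Amat π ν i l).det) x ∧
      HasRootFactorization (fun l => (Amat π ν (i + 1) l).det) y := by
  simp only [det_Amat_eq_eval]
  refine exists_interlaces_tridiagonalDetPoly (fun k hk => ?_) fun k hk => ?_
  · exact div_pos (h.vertex_pos _ (by omega) (by omega)) (h.edge_pos _ (by omega) (by omega))
  · exact div_pos (h.vertex_pos _ (by omega) (by omega)) (h.vertex_pos _ (by omega) (by omega))

theorem det_Amat_le_succ_of_nonpos (h : PosWeights n π ν) (hlam : lam ≤ 0) (hi : i + 1 < n) :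
    0 < (Amat π ν i lam).det ∧ (Amat π ν i lam).det ≤ (Amat π ν (i + 1) lam).det := by
  have hβ (k : ℕ) (hk : k + 1 < n) : lam * π (k + 2) / ν (k + 1) ≤ 0 :=
    div_nonpos_of_nonpos_of_nonneg
      (mul_nonpos_of_nonpos_of_nonneg hlam (h.vertex_pos _ (by omega) (by omega)).le)
      (h.edge_pos _ (by omega) (by omega)).le
  have hγ (k : ℕ) (hk : k + 1 < n) : 0 < π (k + 2) / π (k + 1) :=
    div_pos (h.vertex_pos _ (by omega) (by omega)) (h.vertex_pos _ (by omega) (by omega))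
  induction i with
  | zero =>
    rw [det_Amat_zero, zero_add, det_Amat_one]
    exact ⟨one_pos, by linarith [hβ 0 hi, hγ 0 hi]⟩
  | succ i ih =>
    obtain ⟨hpos, hle⟩ := ih (by omega)
    have hsucc : (Amat π ν (i + 2) lam).det - (Amat π ν (i + 1) lam).det =
        π (i + 3) / π (i + 2) * ((Amat π ν (i + 1) lam).det - (Amat π ν i lam).det) -
          lam * π (i + 3) / ν (i + 2) * (Amat π ν (i + 1) lam).det := by
      rw [det_Amat_succ_succ]
      ring
    have hgrow := mul_nonneg (hγ (i + 1) hi).le (sub_nonneg.2 hle)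
    have hdecay := mul_nonpos_of_nonpos_of_nonneg (hβ (i + 1) hi) (hpos.trans_le hle).le
    exact ⟨hpos.trans_le hle, sub_nonneg.1 (by linarith)⟩

theorem det_Amat_pos_of_nonpos (h : PosWeights n π ν) (hlam : lam ≤ 0) (hi : i < n) :
    0 < (Amat π ν i lam).det := by
  cases i with
  | zero => simp
  | succ i =>
    obtain ⟨hpos, hle⟩ := h.det_Amat_le_succ_of_nonpos hlam hi
    exact hpos.trans_le hle

end PosWeights

theorem HasRootFactorization.detRoot_eq {x : Fin (i + 1) → ℝ}
    (hx : HasRootFactorization (fun l => (Amat π ν (i + 1) l).det) x) (hmono : Monotone x) :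
    detRoot π ν (i + 1) = x 0 :=
  (hx.isLeast hmono).csInf_eq

theorem LtPrevRoot.lt_root {x : Fin i → ℝ} (hlam : LtPrevRoot π ν (i + 1) lam)
    (hx : HasRootFactorization (fun l => (Amat π ν i l).det) x) (hmono : Monotone x) (j : Fin i) :
    lam < x j := by
  cases i with
  | zero => exact j.elim0
  | succ i =>
    have hlt : lam < detRoot π ν (i + 1) := hlam.resolve_left (by omega)
    exact (hx.detRoot_eq hmono ▸ hlt).trans_le (hmono (Fin.zero_le j))

namespace PosWeights

theorem exists_det_Amat_roots (h : PosWeights n π ν) (hi₁ : 1 ≤ i) (hi : i < n) :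
    ∃ S : Finset ℝ, #S = i ∧ (∀ x ∈ S, 0 < x) ∧ (∀ x, (Amat π ν i x).det = 0 ↔ x ∈ S) ∧
      detRoot π ν i ∈ S ∧ ∀ x ∈ S, detRoot π ν i ≤ x := by
  obtain ⟨i, rfl⟩ := Nat.exists_eq_add_of_le' hi₁
  obtain ⟨x, y, hxy, -, hy⟩ := h.exists_interlaces_det_Amat hi
  have hmem (l : ℝ) : (Amat π ν (i + 1) l).det = 0 ↔ l ∈ univ.image y :=
    hy.eq_zero_iff.trans (by simp)
  have hmono : Monotone y := hxy.strictMono_right.monotone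
  refine ⟨univ.image y, ?_, fun l hl => ?_, hmem, ?_, ?_⟩
  · rw [card_image_of_injective _ hxy.strictMono_right.injective, card_univ, Fintype.card_fin]
  · by_contra! hneg
    exact (h.det_Amat_pos_of_nonpos hneg hi).ne' ((hmem l).2 hl)
  · rw [hy.detRoot_eq hmono]
    exact mem_image_of_mem y (mem_univ 0)
  · simpa [hy.detRoot_eq hmono] using fun k => hmono (Fin.zero_le k)

theorem detRoot_succ_lt (h : PosWeights n π ν) (hi₁ : 1 ≤ i) (hi : i + 1 < n) :
    detRoot π ν (i + 1) < detRoot π ν i := by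
  obtain ⟨i, rfl⟩ := Nat.exists_eq_add_of_le' hi₁
  obtain ⟨x, y, hxy, hx, hy⟩ := h.exists_interlaces_det_Amat hi
  rw [hx.detRoot_eq hxy.strictMono_left.monotone, hy.detRoot_eq hxy.strictMono_right.monotone]
  exact (hxy 0).1

theorem detRoot_le_detRoot (h : PosWeights n π ν) {j : ℕ} (hj : 1 ≤ j) (hji : j ≤ i) (hi : i < n) :
    detRoot π ν i ≤ detRoot π ν j := by
  induction i, hji using Nat.le_induction with
  | base => exact le_rfl
  | succ i hji ih => exact (h.detRoot_succ_lt (hj.trans hji) hi).le.trans (ih (by omega))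

theorem det_Amat_detRoot (h : PosWeights n π ν) (hi₁ : 1 ≤ i) (hi : i < n) :
    (Amat π ν i (detRoot π ν i)).det = 0 := by
  obtain ⟨S, -, -, hS, hmem, -⟩ := h.exists_det_Amat_roots hi₁ hi
  exact (hS _).2 hmem

theorem detRoot_le_of_det_Amat_eq_zero (h : PosWeights n π ν) (hi₁ : 1 ≤ i) (hi : i < n)
    (hlam : (Amat π ν i lam).det = 0) : detRoot π ν i ≤ lam := by
  obtain ⟨S, -, -, hS, -, hle⟩ := h.exists_det_Amat_roots hi₁ hi
  exact hle _ ((hS _).1 hlam)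

theorem det_Amat_pos_of_lt_detRoot (h : PosWeights n π ν) (hi₁ : 1 ≤ i) (hi : i < n)
    (hlam : lam < detRoot π ν i) : 0 < (Amat π ν i lam).det := by
  obtain ⟨i, rfl⟩ := Nat.exists_eq_add_of_le' hi₁
  obtain ⟨x, y, hxy, -, hy⟩ := h.exists_interlaces_det_Amat hi
  have hmono : Monotone y := hxy.strictMono_right.monotone
  exact hy.pos fun j => (hy.detRoot_eq hmono ▸ hlam).trans_le (hmono (Fin.zero_le j))

theorem det_Amat_neg (h : PosWeights n π ν) (hi₁ : 1 ≤ i) (hi : i < n)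
    (hlam : detRoot π ν i < lam) (hprev : LtPrevRoot π ν i lam) : (Amat π ν i lam).det < 0 := by
  obtain ⟨i, rfl⟩ := Nat.exists_eq_add_of_le' hi₁
  obtain ⟨x, y, hxy, hx, hy⟩ := h.exists_interlaces_det_Amat hi
  rw [hy.detRoot_eq hxy.strictMono_right.monotone] at hlam
  have hsign := hy.sign (l := lam) (k := 1) (by omega)
    (Fin.cases (fun _ => hlam) fun j hj => by simp at hj)
    (Fin.cases (fun hj => by simp at hj)
      fun j _ => (hprev.lt_root hx hxy.strictMono_left.monotone j).trans (hxy j).2)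
  linarith

theorem det_Amat_nonpos (h : PosWeights n π ν) (hi₁ : 1 ≤ i) (hi : i < n)
    (hlam : detRoot π ν i ≤ lam) (hprev : LtPrevRoot π ν i lam) : (Amat π ν i lam).det ≤ 0 := by
  rcases hlam.eq_or_lt with rfl | hlam
  · exact (h.det_Amat_detRoot hi₁ hi).le
  · exact (h.det_Amat_neg hi₁ hi hlam hprev).le

theorem det_Amat_pos_of_ltPrevRoot (h : PosWeights n π ν) (hi : i ≤ n)
    (hprev : LtPrevRoot π ν i lam) {j : ℕ} (hj : j < i) : 0 < (Amat π ν j lam).det := by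
  rcases Nat.eq_zero_or_pos j with rfl | hj₁
  · rw [det_Amat_zero]
    exact one_pos
  · have hlt : lam < detRoot π ν (i - 1) := hprev.resolve_left (by omega)
    exact h.det_Amat_pos_of_lt_detRoot hj₁ (by omega)
      (hlt.trans_le (h.detRoot_le_detRoot hj₁ (by omega) (by omega)))

end PosWeights

theorem exists_ltPrevRoot_of_detRoot_le (hi₁ : 1 ≤ i) (hlam : detRoot π ν i ≤ lam) :
    ∃ m, 1 ≤ m ∧ m ≤ i ∧ detRoot π ν m ≤ lam ∧ LtPrevRoot π ν m lam := by
  induction i, hi₁ using Nat.le_induction with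
  | base => exact ⟨1, le_rfl, le_rfl, hlam, Or.inl rfl⟩
  | succ i hi₁ ih =>
    rcases le_or_gt (detRoot π ν i) lam with hle | hlt
    · obtain ⟨m, hm₁, hmi, hm⟩ := ih hle
      exact ⟨m, hm₁, hmi.trans i.le_succ, hm⟩
    · exact ⟨i + 1, by omega, le_rfl, hlam, Or.inr hlt⟩

end Amat

/-- The eigenvalue equation `-(generator f) = lam * f` at the vertices `1, …, m - 1` of the path,
summed up to each vertex: the flow of `f` through the edge `{k, k + 1}` is `lam` times the mass
of `f` on `{1, …, k}`. -/
def FluxEq (m : ℕ) (π ν : ℕ → ℝ) (lam : ℝ) (f : ℕ → ℝ) : Prop :=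
  ∀ k, 1 ≤ k → k < m → (f k - f (k + 1)) * ν k = lam * piMean k π f

section FluxEq

variable {n m k : ℕ} {π ν f : ℕ → ℝ} {lam : ℝ}

theorem piMean_zero (π f : ℕ → ℝ) : piMean 0 π f = 0 := by
  simp [piMean]

theorem piMean_succ (k : ℕ) (π f : ℕ → ℝ) :
    piMean (k + 1) π f = piMean k π f + f (k + 1) * π (k + 1) :=
  sum_Icc_succ_top (by omega) _

theorem piMean_one (π f : ℕ → ℝ) : piMean 1 π f = f 1 * π 1 := by
  simp [piMean]

namespace FluxEq

theorem piMean_succ_succ (hf : FluxEq m π ν lam f) (h : PosWeights n π ν) (hmn : m ≤ n)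
    (hk : k + 1 < m) :
    piMean (k + 2) π f =
      (1 + π (k + 2) / π (k + 1) - lam * π (k + 2) / ν (k + 1)) * piMean (k + 1) π f -
        π (k + 2) / π (k + 1) * piMean k π f := by
  have hflux := hf (k + 1) (by omega) hk
  have hπ := (h.vertex_pos (k + 1) (by omega) (by omega)).ne'
  have hν := (h.edge_pos (k + 1) (by omega) (by omega)).ne'
  have hnext : f (k + 2) = f (k + 1) - lam * piMean (k + 1) π f / ν (k + 1) := by
    rw [eq_sub_iff_add_eq, ← eq_sub_iff_add_eq', div_eq_iff hν, hflux]
  rw [piMean_succ (k + 1), hnext]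
  field_simp
  rw [piMean_succ k]
  ring

theorem piMean_succ_eq_det (hf : FluxEq m π ν lam f) (h : PosWeights n π ν) (hmn : m ≤ n)
    (hk : k < m) : piMean (k + 1) π f = f 1 * π 1 * (Amat π ν k lam).det := by
  induction k using Nat.twoStepInduction with
  | zero => rw [det_Amat_zero, zero_add, piMean_one, mul_one]
  | one =>
    rw [hf.piMean_succ_succ h hmn hk, piMean_zero, piMean_one, det_Amat_one]
    ring
  | more k ih₀ ih₁ =>
    rw [hf.piMean_succ_succ h hmn hk, ih₁ (by omega), ih₀ (by omega), det_Amat_succ_succ]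
    ring

theorem eq_zero_of_apply_one (hf : FluxEq m π ν lam f) (h : PosWeights n π ν) (hmn : m ≤ n)
    (hf₁ : f 1 = 0) (hk₁ : 1 ≤ k) (hk : k ≤ m) : f k = 0 := by
  have hmean (j : ℕ) (hj : j ≤ m) : piMean j π f = 0 := by
    cases j with
    | zero => exact piMean_zero π f
    | succ j => rw [hf.piMean_succ_eq_det h hmn hj, hf₁, zero_mul, zero_mul]
  obtain ⟨k, rfl⟩ := Nat.exists_eq_add_of_le' hk₁
  have hmass := piMean_succ k π f
  rw [hmean _ hk, hmean k (by omega), zero_add] at hmass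
  exact (mul_eq_zero.1 hmass.symm).resolve_right (h.vertex_pos _ hk₁ (hk.trans hmn)).ne'

theorem eForm_eq (hf : FluxEq (m + 1) π ν lam f) (g : ℕ → ℝ) :
    EForm (m + 1) ν f g =
      lam * (piMean (m + 1) π (f * g) - piMean (m + 1) π f * g (m + 1)) := by
  induction m with
  | zero =>
    rw [zero_add, piMean_one, piMean_one, Pi.mul_apply, mul_right_comm, sub_self, mul_zero]
    simp [EForm]
  | succ m ih =>
    have hsucc : EForm (m + 2) ν f g = EForm (m + 1) ν f g +
        (f (m + 1) - f (m + 2)) * (g (m + 1) - g (m + 2)) * ν (m + 1) :=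
      sum_Icc_succ_top (by omega) _
    have hflux := hf (m + 1) (by omega) (by omega)
    rw [hsucc, ih fun k hk₁ hk => hf k hk₁ (by omega), piMean_succ (m + 1), piMean_succ (m + 1),
      Pi.mul_apply]
    linear_combination (g (m + 1) - g (m + 2)) * hflux

end FluxEq

theorem exists_fluxEq (hν : ∀ k, 1 ≤ k → k < n → ν k ≠ 0) (π : ℕ → ℝ) (lam : ℝ) :
    ∃ f, f 1 = 1 ∧ FluxEq n π ν lam f := by
  let s : ℕ → ℝ × ℝ := Nat.rec (1, π 1) fun k p =>
    let v := p.1 - lam * p.2 / ν (k + 1)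
    (v, p.2 + v * π (k + 2))
  let f : ℕ → ℝ := fun k => (s (k - 1)).1
  have hmean (k : ℕ) : piMean (k + 1) π f = (s k).2 := by
    induction k with
    | zero => rw [zero_add, piMean_one]; exact one_mul _
    | succ k ih => rw [piMean_succ, ih]; rfl
  refine ⟨f, rfl, fun k hk₁ hk => ?_⟩
  obtain ⟨k, rfl⟩ := Nat.exists_eq_add_of_le' hk₁
  have hstep : f (k + 2) = f (k + 1) - lam * piMean (k + 1) π f / ν (k + 1) := by
    rw [hmean]
    rfl
  rw [hstep, sub_sub_cancel, div_mul_cancel₀ _ (hν _ hk₁ hk)]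

end FluxEq

/-- Covariance of `f` and `g` with respect to `π` on `{1, …, n}`. -/
noncomputable def covPi (n : ℕ) (π f g : ℕ → ℝ) : ℝ :=
  piMean n π (f * g) - piMean n π f * piMean n π g

section Variance

variable {n : ℕ} {π f : ℕ → ℝ}

theorem varPi_eq_covPi (n : ℕ) (π f : ℕ → ℝ) : varPi n π f = covPi n π f f := by
  simp only [varPi, covPi, sq]
  rfl

theorem covPi_add_smul (n : ℕ) (π f g : ℕ → ℝ) (t : ℝ) :
    covPi n π (f + t • g) (f + t • g) =
      covPi n π g g * (t * t) + 2 * covPi n π f g * t + covPi n π f f := by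
  have hmean : piMean n π (f + t • g) = piMean n π f + t * piMean n π g := by
    simp only [piMean, mul_sum, ← sum_add_distrib]
    refine sum_congr rfl fun k _ => ?_
    simp only [Pi.add_apply, Pi.smul_apply, smul_eq_mul]
    ring
  have hsq : piMean n π ((f + t • g) * (f + t • g)) =
      piMean n π (f * f) + 2 * t * piMean n π (f * g) + t * t * piMean n π (g * g) := by
    simp only [piMean, mul_sum, ← sum_add_distrib]
    refine sum_congr rfl fun k _ => ?_
    simp only [Pi.add_apply, Pi.mul_apply, Pi.smul_apply, smul_eq_mul]
    ring
  rw [covPi, covPi, covPi, covPi, hmean, hsq]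
  ring

theorem varPi_eq_piMean_sq (hπ1 : ∑ k ∈ Icc 1 n, π k = 1) (f : ℕ → ℝ) :
    varPi n π f = piMean n π fun k => (f k - piMean n π f) ^ 2 := by
  set c := piMean n π f with hc
  have hexpand : piMean n π (fun k => (f k - c) ^ 2) =
      piMean n π (fun k => f k ^ 2) - 2 * c * piMean n π f + c ^ 2 * ∑ k ∈ Icc 1 n, π k := by
    simp only [piMean, mul_sum, ← sum_sub_distrib, ← sum_add_distrib]
    exact sum_congr rfl fun k _ => by ring
  rw [hexpand, hπ1, ← hc, varPi, ← hc]
  ring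

theorem varPi_nonneg (hπ : ∀ k ∈ Icc 1 n, 0 < π k) (hπ1 : ∑ k ∈ Icc 1 n, π k = 1) (f : ℕ → ℝ) :
    0 ≤ varPi n π f := by
  rw [varPi_eq_piMean_sq hπ1]
  exact sum_nonneg fun k hk => mul_nonneg (sq_nonneg _) (hπ k hk).le

theorem varPi_eq_zero_iff (hπ : ∀ k ∈ Icc 1 n, 0 < π k) (hπ1 : ∑ k ∈ Icc 1 n, π k = 1) :
    varPi n π f = 0 ↔ ¬ Nonconstant n f := by
  have hzero : varPi n π f = 0 ↔ ∀ k ∈ Icc 1 n, f k = piMean n π f := by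
    rw [varPi_eq_piMean_sq hπ1, piMean,
      sum_eq_zero_iff_of_nonneg fun k hk => mul_nonneg (sq_nonneg _) (hπ k hk).le]
    refine forall₂_congr fun k hk => ?_
    rw [mul_eq_zero_iff_right (hπ k hk).ne', sq_eq_zero_iff, sub_eq_zero]
  rw [hzero, Nonconstant]
  push Not
  refine ⟨fun hf i hi j hj => (hf i hi).trans (hf j hj).symm, fun hf i hi => ?_⟩
  calc f i = ∑ j ∈ Icc 1 n, f i * π j := by rw [← mul_sum, hπ1, mul_one]
    _ = piMean n π f := sum_congr rfl fun j hj => by rw [hf i hi j hj]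

theorem varPi_pos (hπ : ∀ k ∈ Icc 1 n, 0 < π k) (hπ1 : ∑ k ∈ Icc 1 n, π k = 1)
    (hf : Nonconstant n f) : 0 < varPi n π f :=
  (varPi_nonneg hπ hπ1 f).lt_of_ne' fun h => (varPi_eq_zero_iff hπ hπ1).1 h hf

end Variance

section SpectralGap

variable {n : ℕ} {π ν f : ℕ → ℝ} {gap : ℝ}

theorem eForm_add_smul (n : ℕ) (ν f g : ℕ → ℝ) (t : ℝ) :
    EForm n ν (f + t • g) (f + t • g) =
      EForm n ν g g * (t * t) + 2 * EForm n ν f g * t + EForm n ν f f := by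
  simp only [EForm, mul_sum, sum_mul, ← sum_add_distrib]
  refine sum_congr rfl fun k _ => ?_
  simp only [Pi.add_apply, Pi.smul_apply, smul_eq_mul]
  ring

theorem eForm_self_nonneg (hν : ∀ k, 1 ≤ k → k < n → 0 ≤ ν k) (f : ℕ → ℝ) : 0 ≤ EForm n ν f f :=
  sum_nonneg fun k hk => mul_nonneg (mul_self_nonneg _) <| by
    obtain ⟨hk₁, hk⟩ := mem_Icc.1 hk
    exact hν k hk₁ (by omega)

theorem IsSpectralGap.mul_varPi_le (hgap : IsSpectralGap n π ν gap) (h : PosWeights n π ν)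
    (hπ1 : ∑ k ∈ Icc 1 n, π k = 1) (f : ℕ → ℝ) : gap * varPi n π f ≤ EForm n ν f f := by
  by_cases hf : Nonconstant n f
  · exact (le_div_iff₀ (varPi_pos h.vertex_pos_of_mem_Icc hπ1 hf)).1 (hgap.2 ⟨f, hf, rfl⟩)
  · rw [(varPi_eq_zero_iff h.vertex_pos_of_mem_Icc hπ1).2 hf, mul_zero]
    exact eForm_self_nonneg h.edge_nonneg f

theorem eForm_eq_mul_covPi_of_minimizer (hle : ∀ g, gap * varPi n π g ≤ EForm n ν g g)
    (hf : EForm n ν f f = gap * varPi n π f) (g : ℕ → ℝ) :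
    EForm n ν f g = gap * covPi n π f g := by
  have hquad (t : ℝ) : 0 ≤ (EForm n ν g g - gap * covPi n π g g) * (t * t) +
      2 * (EForm n ν f g - gap * covPi n π f g) * t + 0 := by
    have hle' := hle (f + t • g)
    rw [varPi_eq_covPi, covPi_add_smul, eForm_add_smul, hf, varPi_eq_covPi] at hle'
    linarith
  have hdiscrim := discrim_le_zero hquad
  rw [discrim, mul_zero, sub_zero] at hdiscrim
  have hzero := sq_eq_zero_iff.1 (hdiscrim.antisymm (sq_nonneg _))
  linarith

theorem eForm_indicator_Iic {k : ℕ} (hk₁ : 1 ≤ k) (hk : k < n) (ν f : ℕ → ℝ) :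
    EForm n ν f ((Set.Iic k).indicator 1) = (f k - f (k + 1)) * ν k := by
  rw [EForm, sum_eq_single_of_mem k (mem_Icc.2 ⟨hk₁, by omega⟩)]
  · simp
  · intro j _ hjk
    have hj : j ≤ k ↔ j + 1 ≤ k := by omega
    simp [Set.indicator_apply, hj]

theorem covPi_indicator_Iic {k : ℕ} (hk : k ≤ n) (π f : ℕ → ℝ) :
    covPi n π f ((Set.Iic k).indicator 1) = piMean k π fun j => f j - piMean n π f := by
  have hmean (g : ℕ → ℝ) : piMean n π (g * (Set.Iic k).indicator 1) = piMean k π g := by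
    refine (sum_subset_zero_on_sdiff (Icc_subset_Icc le_rfl hk) (fun j hj => ?_)
      fun j hj => ?_).symm
    · have hjk : k < j := by simp only [mem_sdiff, mem_Icc] at hj; omega
      simp [hjk]
    · simp [(mem_Icc.1 hj).2]
  have hone := hmean 1
  rw [one_mul] at hone
  rw [covPi, hmean, hone]
  simp [piMean, sub_mul, mul_sum]

theorem fluxEq_sub_piMean (hf : ∀ g, EForm n ν f g = gap * covPi n π f g) :
    FluxEq n π ν gap fun k => f k - piMean n π f := by
  intro k hk₁ hk
  rw [← covPi_indicator_Iic hk.le, ← hf, eForm_indicator_Iic hk₁ hk, sub_sub_sub_cancel_right]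

theorem IsSpectralGap.det_Amat_eq_zero (hgap : IsSpectralGap n π ν gap) (h : PosWeights n π ν)
    (hπ1 : ∑ k ∈ Icc 1 n, π k = 1) (hn : 2 ≤ n) : (Amat π ν (n - 1) gap).det = 0 := by
  obtain ⟨f, hf, hquot⟩ := hgap.1
  have hmin : EForm n ν f f = gap * varPi n π f :=
    ((eq_div_iff (varPi_pos h.vertex_pos_of_mem_Icc hπ1 hf).ne').1 hquot).symm
  have hflux := fluxEq_sub_piMean (eForm_eq_mul_covPi_of_minimizer (hgap.mul_varPi_le h hπ1) hmin)
  have hmean : piMean n π (fun k => f k - piMean n π f) = 0 := by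
    simp only [piMean, sub_mul, sum_sub_distrib, ← mul_sum, hπ1, mul_one, sub_self]
  have hdet := hflux.piMean_succ_eq_det h le_rfl (k := n - 1) (by omega)
  rw [Nat.sub_add_cancel (by omega), hmean] at hdet
  refine (mul_eq_zero.1 hdet.symm).resolve_left
    (mul_ne_zero (fun hf₁ => ?_) (h.vertex_pos 1 le_rfl (by omega)).ne')
  have hconst (k : ℕ) (hk : k ∈ Icc 1 n) : f k = piMean n π f :=
    sub_eq_zero.1 (hflux.eq_zero_of_apply_one h le_rfl hf₁ (mem_Icc.1 hk).1 (mem_Icc.1 hk).2)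
  obtain ⟨i, hi, j, hj, hij⟩ := hf
  exact hij ((hconst i hi).trans (hconst j hj).symm)

theorem IsSpectralGap.le_of_det_Amat_eq_zero (hgap : IsSpectralGap n π ν gap)
    (h : PosWeights n π ν) (hπ1 : ∑ k ∈ Icc 1 n, π k = 1) (hn : 1 ≤ n) {lam : ℝ}
    (hlam : (Amat π ν (n - 1) lam).det = 0) : gap ≤ lam := by
  obtain ⟨f, hf₁, hflux⟩ := exists_fluxEq (fun k hk₁ hk => (h.edge_pos k hk₁ hk).ne') π lam
  obtain ⟨n, rfl⟩ := Nat.exists_eq_add_of_le' hn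
  have hmean : piMean (n + 1) π f = 0 := by
    rw [Nat.add_sub_cancel] at hlam
    rw [hflux.piMean_succ_eq_det h le_rfl n.lt_succ_self, hlam, mul_zero]
  have hvar : EForm (n + 1) ν f f = lam * varPi (n + 1) π f := by
    rw [hflux.eForm_eq, varPi_eq_covPi, covPi, hmean, zero_mul, zero_mul]
  have hf : Nonconstant (n + 1) f := by
    by_contra hconst
    have hone (k : ℕ) (hk : k ∈ Icc 1 (n + 1)) : f k * π k = π k := by
      have hfk : f k = f 1 := by_contra fun hne =>
        hconst ⟨k, hk, 1, mem_Icc.2 ⟨le_rfl, hn⟩, hne⟩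
      rw [hfk, hf₁, one_mul]
    rw [piMean, sum_congr rfl hone, hπ1] at hmean
    exact one_ne_zero hmean
  have hpos := varPi_pos h.vertex_pos_of_mem_Icc hπ1 hf
  exact hgap.2 ⟨f, hf, by rw [hvar, mul_div_cancel_right₀ _ hpos.ne']⟩

theorem IsSpectralGap.eq_detRoot (hgap : IsSpectralGap n π ν gap) (h : PosWeights n π ν)
    (hπ1 : ∑ k ∈ Icc 1 n, π k = 1) (hn : 2 ≤ n) : gap = detRoot π ν (n - 1) :=
  (hgap.le_of_det_Amat_eq_zero h hπ1 (by omega)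
    (h.det_Amat_detRoot (by omega) (by omega))).antisymm
    (h.detRoot_le_of_det_Amat_eq_zero (by omega) (by omega) (hgap.det_Amat_eq_zero h hπ1 hn))

end SpectralGap

namespace PosPartRec

variable {n i k : ℕ} {π ν φ : ℕ → ℝ} {lam : ℝ}

theorem le_succ (hφ : PosPartRec n π ν lam φ) (hν : ∀ k, 1 ≤ k → k < n → 0 ≤ ν k)
    (hk₁ : 1 ≤ k) (hk : k < n) : φ k ≤ φ (k + 1) := by
  rw [hφ k hk₁ hk]
  exact le_add_of_nonneg_right (div_nonneg (le_max_right _ _) (hν k hk₁ hk))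

theorem apply_le_apply (hφ : PosPartRec n π ν lam φ) (hν : ∀ k, 1 ≤ k → k < n → 0 ≤ ν k)
    {j : ℕ} (hj : 1 ≤ j) (hjk : j ≤ k) (hk : k ≤ n) : φ j ≤ φ k := by
  induction k, hjk using Nat.le_induction with
  | base => exact le_rfl
  | succ k hjk ih => exact (ih (by omega)).trans (hφ.le_succ hν (hj.trans hjk) hk)

theorem succ_succ (hφ : PosPartRec n π ν lam φ) (hk : k + 1 < n)
    (hflux : (φ k - φ (k + 1)) * ν k = lam * piMean k π φ) :
    φ (k + 2) = φ (k + 1) + max (-(lam * piMean (k + 1) π φ)) 0 / ν (k + 1) := by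
  have hmass : (φ (k + 1) - φ k) * ν k - lam * (π (k + 1) * φ (k + 1)) =
      -(lam * piMean (k + 1) π φ) := by
    rw [piMean_succ]
    linear_combination -hflux
  rw [hφ (k + 1) (by omega) hk, Nat.add_sub_cancel, hmass]

theorem fluxEq_of_det_Amat_pos (hφ : PosPartRec n π ν lam φ) (h : PosWeights n π ν)
    (hν0 : ν 0 = 0) (hφ₁ : φ 1 = -1) (hlam : 0 < lam) (hi : i < n)
    (hdet : ∀ j < i, 0 < (Amat π ν j lam).det) : FluxEq (i + 1) π ν lam φ := by
  induction i with
  | zero => exact fun k hk₁ hk => by omega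
  | succ i ih =>
    have hflux := ih (by omega) fun j hj => hdet j (by omega)
    have hfluxi : (φ i - φ (i + 1)) * ν i = lam * piMean i π φ := by
      rcases Nat.eq_zero_or_pos i with rfl | hi₁
      · rw [hν0, piMean_zero, mul_zero, mul_zero]
      · exact hflux i hi₁ i.lt_succ_self
    have hneg : lam * piMean (i + 1) π φ ≤ 0 := by
      rw [hflux.piMean_succ_eq_det h hi.le i.lt_succ_self, hφ₁]
      have := mul_pos hlam
        (mul_pos (h.vertex_pos 1 le_rfl (by omega)) (hdet i i.lt_succ_self))
      linarith
    intro k hk₁ hk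
    rcases (Nat.le_of_lt_succ hk).eq_or_lt with rfl | hk
    · rw [hφ.succ_succ hi hfluxi, max_eq_left (neg_nonneg.2 hneg), sub_add_cancel_left, neg_mul,
        div_mul_cancel₀ _ (h.edge_pos _ hk₁ hi).ne', neg_neg]
    · exact hflux k hk₁ hk

section MinusOneStart

variable (hφ : PosPartRec n π ν lam φ) (h : PosWeights n π ν) (hν0 : ν 0 = 0) (hφ₁ : φ 1 = -1)
  (hlam : 0 < lam)

include hφ h hν0 hφ₁ hlam

theorem fluxEq (hi : i < n) (hprev : LtPrevRoot π ν i lam) : FluxEq (i + 1) π ν lam φ :=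
  hφ.fluxEq_of_det_Amat_pos h hν0 hφ₁ hlam hi fun _ => h.det_Amat_pos_of_ltPrevRoot hi.le hprev

theorem piMean_succ_eq (hi : i < n) (hprev : LtPrevRoot π ν i lam) :
    piMean (i + 1) π φ = -(π 1) * (Amat π ν i lam).det := by
  rw [(hφ.fluxEq h hν0 hφ₁ hlam hi hprev).piMean_succ_eq_det h hi i.lt_succ_self, hφ₁, neg_one_mul]

theorem piMean_neg (hi₁ : 1 ≤ i) (hi : i ≤ n) (hprev : LtPrevRoot π ν i lam) :
    piMean i π φ < 0 := by
  obtain ⟨i, rfl⟩ := Nat.exists_eq_add_of_le' hi₁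
  have hdet (j : ℕ) (hj : j < i + 1) : 0 < (Amat π ν j lam).det :=
    h.det_Amat_pos_of_ltPrevRoot hi hprev hj
  have hflux := hφ.fluxEq_of_det_Amat_pos h hν0 hφ₁ hlam hi fun j hj => hdet j (by omega)
  rw [hflux.piMean_succ_eq_det h hi i.lt_succ_self, hφ₁, neg_one_mul]
  exact mul_neg_of_neg_of_pos (neg_neg_of_pos (h.vertex_pos 1 le_rfl (by omega)))
    (hdet i i.lt_succ_self)

theorem lt_succ (hi₁ : 1 ≤ i) (hi : i < n) (hprev : LtPrevRoot π ν i lam) : φ i < φ (i + 1) := by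
  have hflux := hφ.fluxEq h hν0 hφ₁ hlam hi hprev i hi₁ i.lt_succ_self
  have hneg := mul_neg_of_pos_of_neg hlam (hφ.piMean_neg h hν0 hφ₁ hlam hi₁ hi.le hprev)
  rw [← hflux] at hneg
  exact sub_neg.1 (neg_of_mul_neg_left hneg (h.edge_pos i hi₁ hi).le)

theorem piMean_succ_nonneg (hi₁ : 1 ≤ i) (hi : i < n) (hprev : LtPrevRoot π ν i lam)
    (hroot : detRoot π ν i ≤ lam) : 0 ≤ piMean (i + 1) π φ := by
  rw [hφ.piMean_succ_eq h hν0 hφ₁ hlam hi hprev]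
  exact mul_nonneg_of_nonpos_of_nonpos (neg_nonpos.2 (h.vertex_pos 1 le_rfl (by omega)).le)
    (h.det_Amat_nonpos hi₁ hi hroot hprev)

theorem succ_eq_succ_succ (hi₁ : 1 ≤ i) (hi : i + 1 < n) (hprev : LtPrevRoot π ν i lam)
    (hroot : detRoot π ν i ≤ lam) : φ (i + 1) = φ (i + 2) := by
  have hi' : i < n := by omega
  have hmean := hφ.piMean_succ_nonneg h hν0 hφ₁ hlam hi₁ hi' hprev hroot
  rw [hφ.succ_succ hi (hφ.fluxEq h hν0 hφ₁ hlam hi' hprev i hi₁ i.lt_succ_self),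
    max_eq_right (neg_nonpos.2 (mul_nonneg hlam.le hmean)), zero_div, add_zero]

theorem piMean_pos_of_succ_lt (hi₁ : 1 ≤ i) (hprev : LtPrevRoot π ν i lam)
    (hroot : detRoot π ν i ≤ lam) (hik : i + 1 < k) (hk : k ≤ n) : 0 < piMean k π φ := by
  have hmean := hφ.piMean_succ_nonneg h hν0 hφ₁ hlam hi₁ (by omega) hprev hroot
  have hpos : 0 < φ (i + 1) := by
    have hneg := hφ.piMean_neg h hν0 hφ₁ hlam hi₁ (by omega) hprev
    rw [piMean_succ] at hmean
    exact pos_of_mul_pos_left (by linarith) (h.vertex_pos (i + 1) (by omega) (by omega)).le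
  have hadd (j : ℕ) (hij : i + 1 ≤ j) (hj : j < n) : 0 < φ (j + 1) * π (j + 1) :=
    mul_pos (hpos.trans_le (hφ.apply_le_apply h.edge_nonneg (by omega) (by omega) hj))
      (h.vertex_pos _ (by omega) hj)
  induction k, hik using Nat.le_induction with
  | base => rw [piMean_succ]; exact add_pos_of_nonneg_of_pos hmean (hadd _ le_rfl hk)
  | succ k hik ih => rw [piMean_succ]; exact add_pos (ih (by omega)) (hadd k (by omega) hk)

theorem piMean_succ_pos (hi₁ : 1 ≤ i) (hi : i < n) (hroot : detRoot π ν i < lam) :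
    0 < piMean (i + 1) π φ := by
  obtain ⟨m, hm₁, hmi, hmroot, hprev⟩ := exists_ltPrevRoot_of_detRoot_le hi₁ hroot.le
  rcases hmi.eq_or_lt with rfl | hmi
  · rw [hφ.piMean_succ_eq h hν0 hφ₁ hlam hi hprev]
    exact mul_pos_of_neg_of_neg (neg_neg_of_pos (h.vertex_pos 1 le_rfl (by omega)))
      (h.det_Amat_neg hi₁ hi hroot hprev)
  · exact hφ.piMean_pos_of_succ_lt h hν0 hφ₁ hlam hm₁ hprev hmroot (by omega) hi

theorem sub_detRoot_mul_piMean_succ_pos (hi₁ : 1 ≤ i) (hi : i < n) (hne : lam ≠ detRoot π ν i) :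
    0 < (lam - detRoot π ν i) * piMean (i + 1) π φ := by
  rcases hne.lt_or_gt with hlt | hgt
  · exact mul_pos_of_neg_of_neg (sub_neg.2 hlt)
      (hφ.piMean_neg h hν0 hφ₁ hlam (by omega) hi (Or.inr hlt))
  · exact mul_pos (sub_pos.2 hgt) (hφ.piMean_succ_pos h hν0 hφ₁ hlam hi₁ hi hgt)

end MinusOneStart

end PosPartRec

theorem stmt7 (n : ℕ) (hn : 3 ≤ n) (π ν : ℕ → ℝ)
    (hπ : ∀ i ∈ Finset.Icc 1 n, 0 < π i)
    (hπ1 : ∑ i ∈ Finset.Icc 1 n, π i = 1)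
    (hν : ∀ i ∈ Finset.Icc 1 (n - 1), 0 < ν i)
    (hν0 : ν 0 = 0) (hνn : ν n = 0)
    (gap : ℝ) (hgap : IsSpectralGap n π ν gap) :
    ∃ lamRoot : ℕ → ℝ,
      -- for every `1 ≤ i ≤ n−1`, `det A_i(λ)` has exactly `i` distinct positive real
      -- roots, and `lamRoot i` is the smallest of them
      (∀ i, 1 ≤ i → i ≤ n - 1 → ∃ S : Finset ℝ,
        S.card = i ∧ (∀ x ∈ S, (0 : ℝ) < x) ∧
        (∀ x : ℝ, Matrix.det (Amat π ν i x) = 0 ↔ x ∈ S) ∧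
        lamRoot i ∈ S ∧ (∀ x ∈ S, lamRoot i ≤ x)) ∧
      -- (1) `λ^G = λ^{(n−1)} < λ^{(n−2)} < ⋯ < λ^{(1)}`
      gap = lamRoot (n - 1) ∧
      (∀ i, 1 ≤ i → i ≤ n - 2 → lamRoot (i + 1) < lamRoot i) ∧
      -- statements about `φ_λ` (`λ^{(0)} := ∞` is encoded by the disjunct `i = 1`)
      (∀ lam : ℝ, 0 < lam → ∀ φ : ℕ → ℝ, φ 1 = -1 → PosPartRec n π ν lam φ →
        -- (2)
        (∀ i, 1 ≤ i → i ≤ n - 2 → lamRoot i ≤ lam → (i = 1 ∨ lam < lamRoot (i - 1)) →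
          φ i < φ (i + 1) ∧ φ (i + 1) = φ (i + 2)) ∧
        -- (3)
        (lam < lamRoot (n - 2) → φ (n - 1) < φ n) ∧
        -- `T_{i+1}(λ) = −π(1) det A_i(λ)` on `(0, λ^{(i−1)})` and
        -- `(λ − λ^{(i)}) T_{i+1}(λ) > 0` off `λ^{(i)}`
        (∀ i, 1 ≤ i → i ≤ n - 1 →
          ((i = 1 ∨ lam < lamRoot (i - 1)) →
            (∑ j ∈ Finset.Icc 1 (i + 1), φ j * π j) =
              -(π 1) * Matrix.det (Amat π ν i lam)) ∧
          (lam ≠ lamRoot i →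
            0 < (lam - lamRoot i) * ∑ j ∈ Finset.Icc 1 (i + 1), φ j * π j))) := by
  have h : PosWeights n π ν :=
    ⟨fun k hk₁ hk => hπ k (mem_Icc.2 ⟨hk₁, hk⟩),
      fun k hk₁ hk => hν k (mem_Icc.2 ⟨hk₁, Nat.le_sub_one_of_lt hk⟩)⟩
  refine ⟨detRoot π ν, fun i hi₁ hi => h.exists_det_Amat_roots hi₁ (by omega),
    hgap.eq_detRoot h hπ1 (by omega), fun i hi₁ hi => h.detRoot_succ_lt hi₁ (by omega),
    fun lam hlam φ hφ₁ hφ => ⟨fun i hi₁ hi hroot hprev => ?_, fun hlt => ?_, fun i hi₁ hi => ?_⟩⟩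
  · exact ⟨hφ.lt_succ h hν0 hφ₁ hlam hi₁ (by omega) hprev,
      hφ.succ_eq_succ_succ h hν0 hφ₁ hlam hi₁ (by omega) hprev hroot⟩
  · have hlast := hφ.lt_succ h hν0 hφ₁ hlam (i := n - 1) (by omega) (by omega) (Or.inr hlt)
    rwa [Nat.sub_add_cancel (by omega)] at hlast
  · exact ⟨hφ.piMean_succ_eq h hν0 hφ₁ hlam (by omega),
      hφ.sub_detRoot_mul_piMean_succ_pos h hν0 hφ₁ hlam hi₁ (by omega)⟩
end

section
/- Assume n ≥ 3. The polynomial det A_{n−2}(λ) has exactly n−2 distinct roots α_1 < ⋯ < α_{n−2}, and, setting α_0 := 0 and α_{n−1} := ∞: (1) λ^G_j < α_j < λ^G_{j+1} for 1 ≤ j ≤ n−2; (2) for each 1 ≤ j ≤ n−1, the function ξ_λ is of type j for all λ ∈ (α_{j−1}, α_j]. -/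
open Finset

/-- `ζ` is an eigenvector of `M^G_{π,ν}` with eigenvalue `lam`, expressed through the
Euler–Lagrange equations (recall the conventions `ν 0 = 0`, `ν n = 0`). -/
def IsEigen (n : ℕ) (π ν : ℕ → ℝ) (lam : ℝ) (ζ : ℕ → ℝ) : Prop :=
  (∃ k ∈ Finset.Icc 1 n, ζ k ≠ 0) ∧
  ∀ k ∈ Finset.Icc 1 n,
    lam * (π k * ζ k) = (ζ k - ζ (k - 1)) * ν (k - 1) + (ζ k - ζ (k + 1)) * ν k

/-- `ξ` is the function `ξ_λ`: `ξ(1) = −1` and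
`ξ(k+1) = ξ(k) + ([ξ(k)−ξ(k−1)] ν(k−1,k) − λ π(k) ξ(k))/ν(k,k+1)` for `1 ≤ k < n`. -/
def XiRec (n : ℕ) (π ν : ℕ → ℝ) (lam : ℝ) (ξ : ℕ → ℝ) : Prop :=
  ξ 1 = -1 ∧ ∀ k, 1 ≤ k → k < n →
    ξ (k + 1) = ξ k + ((ξ k - ξ (k - 1)) * ν (k - 1) - lam * (π k * ξ k)) / ν k

/-- `f` is of type `i` on `{1,…,n}` with peak-valley points `a 1 < b 1 ≤ a 2 < b 2 ≤ ⋯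
≤ a i < b i ≤ n`. -/
def IsTypeWith (n : ℕ) (f : ℕ → ℝ) (i : ℕ) (a b : ℕ → ℕ) : Prop :=
  a 1 = 1 ∧ b i ≤ n ∧
  (∀ j, 1 ≤ j → j ≤ i → a j < b j) ∧
  (∀ j, 1 ≤ j → j < i → b j ≤ a (j + 1) ∧ a (j + 1) ≤ b j + 1) ∧
  (∀ j, 1 ≤ j → j ≤ i →
    StrictMonoOn f (Set.Icc (a j) (b j)) ∨ StrictAntiOn f (Set.Icc (a j) (b j))) ∧
  (∀ j, 1 ≤ j → j < i →
    (f (a j) - f (a j + 1)) * (f (a (j + 1)) - f (a (j + 1) + 1)) < 0) ∧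
  (∀ j, 1 ≤ j → j < i → f (a (j + 1)) = f (b j)) ∧
  (∀ k, b i ≤ k → k ≤ n → f k = f (b i))

/-- `f` is of type `i` on `{1,…,n}`. -/
def IsType (n : ℕ) (f : ℕ → ℝ) (i : ℕ) : Prop :=
  ∃ a b : ℕ → ℕ, IsTypeWith n f i a b

/-!
Write `D k x = det A_k(x)`. Dividing the eigenvalue equation at a vertex by `π` turns it into a
three-term recurrence for the flux `ν k * (f (k + 1) - f k)`, and this is the recurrence of the
minors `D k`; so the flux of `ξ_λ` is `λ π(1)` times `D k λ`, and an eigenvector with nonzero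
eigenvalue `λ` has zero flux out of the last vertex, i.e. `D (n - 1) λ = 0`. The minors form a Sturm
chain, so the number of sign changes in `D 0 λ, …, D k λ` is the number of zeros of `D k` below
`λ`. For consecutive `k` this gives interlacing of the zeros, and for `k = n - 2` it counts the sign
changes among the increments of `ξ_λ`, that is, its changes of monotonicity.
-/

/-! ### Sign changes and Sturm sequences -/

/-- The number of sign changes in `d 0, …, d k`, zeros being skipped. The recursion assumes
`0 ≤ d 0`, so that `(-1) ^ signVar d k` is the sign of the last nonzero term. -/
noncomputable def signVar (d : ℕ → ℝ) : ℕ → ℕ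
  | 0 => 0
  | k + 1 => if (-1) ^ signVar d k * d (k + 1) < 0 then signVar d k + 1 else signVar d k

section SignVar

variable {d : ℕ → ℝ} {k : ℕ}

lemma signVar_succ_of_neg (h : (-1) ^ signVar d k * d (k + 1) < 0) :
    signVar d (k + 1) = signVar d k + 1 := if_pos h

lemma signVar_succ_of_nonneg (h : 0 ≤ (-1) ^ signVar d k * d (k + 1)) :
    signVar d (k + 1) = signVar d k := if_neg h.not_gt

lemma signVar_succ_of_eq_zero (h : d (k + 1) = 0) : signVar d (k + 1) = signVar d k :=
  signVar_succ_of_nonneg (by simp [h])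

lemma signVar_le_succ (d : ℕ → ℝ) (k : ℕ) : signVar d k ≤ signVar d (k + 1) := by
  rw [signVar]; split_ifs <;> omega

lemma signVar_succ_le (d : ℕ → ℝ) (k : ℕ) : signVar d (k + 1) ≤ signVar d k + 1 := by
  rw [signVar]; split_ifs <;> omega

lemma signVar_le_self (d : ℕ → ℝ) (k : ℕ) : signVar d k ≤ k := by
  induction k with
  | zero => exact le_rfl
  | succ k ih => exact (signVar_succ_le d k).trans (by omega)

lemma neg_one_pow_signVar_mul_nonneg (h0 : 0 ≤ d 0) (k : ℕ) : 0 ≤ (-1) ^ signVar d k * d k := by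
  induction k with
  | zero => simpa [signVar] using h0
  | succ k _ =>
    rcases lt_or_ge ((-1) ^ signVar d k * d (k + 1)) 0 with h | h
    · rw [signVar_succ_of_neg h, pow_succ]; linarith
    · rwa [signVar_succ_of_nonneg h]

lemma neg_one_pow_signVar_mul_pos (h0 : 0 ≤ d 0) (hk : d k ≠ 0) : 0 < (-1) ^ signVar d k * d k :=
  (neg_one_pow_signVar_mul_nonneg h0 k).lt_of_ne' (mul_ne_zero (by simp) hk)

lemma signVar_eq_zero (h : ∀ i ≤ k, 0 ≤ d i) : signVar d k = 0 := by
  induction k with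
  | zero => rfl
  | succ k ih =>
    have hk := ih fun i hi => h i (by omega)
    rw [signVar_succ_of_nonneg (by simpa [hk] using h (k + 1) le_rfl), hk]

lemma signVar_eq_self (h : ∀ i ≤ k, 0 < (-1) ^ i * d i) : signVar d k = k := by
  induction k with
  | zero => rfl
  | succ k ih =>
    have hk := ih fun i hi => h i (by omega)
    have hsign := h (k + 1) le_rfl
    rw [pow_succ] at hsign
    rw [signVar_succ_of_neg (by rw [hk]; linarith), hk]

lemma signVar_eq_of_eq_mul {e g : ℕ → ℝ} (hg : ∀ i ≤ k, 0 < g i) (he : ∀ i ≤ k, e i = g i * d i) :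
    signVar e k = signVar d k := by
  induction k with
  | zero => rfl
  | succ k ih =>
    have hneg (x : ℝ) : g (k + 1) * x < 0 ↔ x < 0 := smul_neg_iff_of_pos_left (hg (k + 1) le_rfl)
    simp only [signVar, ih (fun i hi => hg i (by omega)) fun i hi => he i (by omega),
      he (k + 1) le_rfl, mul_left_comm _ (g (k + 1)), hneg]

lemma signVar_add_two (h0 : 0 ≤ d 0) (h : d k * d (k + 2) < 0) :
    signVar d (k + 2) = signVar d k + 1 := by
  have hk : 0 < (-1) ^ signVar d k * d k :=
    neg_one_pow_signVar_mul_pos h0 (left_ne_zero_of_mul h.ne)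
  have hopp : (-1) ^ signVar d k * d (k + 2) < 0 := by
    rcases neg_one_pow_eq_or ℝ (signVar d k) with hs | hs <;> rw [hs] at hk ⊢ <;> nlinarith
  rcases lt_or_ge ((-1) ^ signVar d k * d (k + 1)) 0 with h1 | h1
  · have hV := signVar_succ_of_neg h1
    rw [signVar_succ_of_nonneg (by rw [hV, pow_succ]; linarith), hV]
  · have hV := signVar_succ_of_nonneg h1
    rw [signVar_succ_of_neg (by rwa [hV]), hV]

lemma signVar_add_one_eq_of_mem_Ioc {α : ℕ → ℝ} {m j : ℕ} {x : ℝ} (hj : 1 ≤ j) (hjm : j ≤ m + 1)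
    (hlow : j = 1 ∨ 2 ≤ j ∧ α (j - 1) < x) (hupp : j = m + 1 ∨ x ≤ α j)
    (hα : ∀ i, 1 ≤ i → i ≤ m → (signVar d m < i ↔ x ≤ α i)) : signVar d m + 1 = j := by
  have hlt : signVar d m < j := by
    by_cases hjm' : j ≤ m
    · exact (hα j hj hjm').2 (hupp.resolve_left (by omega))
    · exact (signVar_le_self d m).trans_lt (by omega)
  have hge : j ≤ signVar d m + 1 := by
    rcases hlow with rfl | ⟨hj2, hx⟩
    · omega
    · have := mt (hα (j - 1) (by omega) (by omega)).1 hx.not_ge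
      omega
  omega

end SignVar

/-- The sign condition on a Sturm sequence evaluated at a point: `d 0 > 0`, and wherever one of the
interior terms among `d 0, …, d m` vanishes, its two neighbours have opposite signs. -/
structure IsSturmSequence (d : ℕ → ℝ) (m : ℕ) : Prop where
  zero_pos : 0 < d 0
  mul_neg : ∀ k, k + 2 ≤ m → d (k + 1) = 0 → d k * d (k + 2) < 0

namespace IsSturmSequence

variable {d : ℕ → ℝ} {m k : ℕ}

lemma exists_eq_succ (h : IsSturmSequence d m) (hk : d k = 0) : ∃ i, k = i + 1 :=
  Nat.exists_eq_succ_of_ne_zero fun h0 => h.zero_pos.ne' (h0 ▸ hk)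

lemma ne_zero_of_succ_eq_zero (h : IsSturmSequence d m) (hk : k + 1 ≤ m) (h1 : d (k + 1) = 0) :
    d k ≠ 0 := by
  intro h0
  obtain ⟨i, rfl⟩ := h.exists_eq_succ h0
  exact (h.mul_neg i hk h0).ne (by rw [h1, mul_zero])

lemma signVar_succ_of_left_eq_zero (h : IsSturmSequence d m) (hk : k + 1 ≤ m) (h0 : d k = 0) :
    signVar d (k + 1) = signVar d k + 1 := by
  obtain ⟨i, rfl⟩ := h.exists_eq_succ h0
  rw [signVar_add_two h.zero_pos.le (h.mul_neg i hk h0), signVar_succ_of_eq_zero h0]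

lemma of_eq_mul {e g : ℕ → ℝ} (h : IsSturmSequence d m) (hg : ∀ i ≤ m, 0 < g i)
    (he : ∀ i ≤ m, e i = g i * d i) : IsSturmSequence e m where
  zero_pos := by
    rw [he 0 m.zero_le]
    exact mul_pos (hg 0 m.zero_le) h.zero_pos
  mul_neg k hk hk1 := by
    have hd : d (k + 1) = 0 := by
      simpa [he (k + 1) (by omega), (hg (k + 1) (by omega)).ne'] using hk1
    rw [he k (by omega), he (k + 2) hk, mul_mul_mul_comm]
    exact mul_neg_of_pos_of_neg (mul_pos (hg k (by omega)) (hg _ hk)) (h.mul_neg k hk hd)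

end IsSturmSequence

/-! ### Sturm's theorem -/

section Sturm

open Filter Topology Polynomial

/-- The properties of functions `D 0, …, D m` used in Sturm's theorem: pointwise they form a Sturm
sequence, `D k` is continuous with at most `k` zeros, and the signs of `D 0, …, D m` near `-∞` and
`+∞` are those of polynomials of degree `k` with leading coefficient of sign `(-1) ^ k`. -/
structure IsSturmChain (D : ℕ → ℝ → ℝ) (m : ℕ) : Prop where
  isSturmSequence : ∀ x, IsSturmSequence (fun k => D k x) m
  continuous : ∀ k ≤ m, Continuous (D k)
  encard_zeros_le : ∀ k ≤ m, {x | D k x = 0}.encard ≤ k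
  eventually_atBot : ∀ k ≤ m, ∀ᶠ x in atBot, 0 < D k x
  eventually_atTop : ∀ k ≤ m, ∀ᶠ x in atTop, 0 < (-1) ^ k * D k x

namespace IsSturmChain

variable {D : ℕ → ℝ → ℝ} {m k : ℕ}

lemma eventually_signVar_atBot (h : IsSturmChain D m) (hk : k ≤ m) :
    ∀ᶠ x in atBot, signVar (fun i => D i x) k = 0 := by
  have hpos : ∀ᶠ x in atBot, ∀ i ∈ Set.Iic k, 0 < D i x :=
    (eventually_all_finite (Set.finite_Iic k)).2 fun i hi => h.eventually_atBot i (hi.trans hk)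
  filter_upwards [hpos] with x hx using signVar_eq_zero fun i hi => (hx i hi).le

lemma eventually_signVar_atTop (h : IsSturmChain D m) (hk : k ≤ m) :
    ∀ᶠ x in atTop, signVar (fun i => D i x) k = k := by
  have hpos : ∀ᶠ x in atTop, ∀ i ∈ Set.Iic k, 0 < (-1) ^ i * D i x :=
    (eventually_all_finite (Set.finite_Iic k)).2 fun i hi => h.eventually_atTop i (hi.trans hk)
  filter_upwards [hpos] with x hx using signVar_eq_self hx

-- A zero of `D k` is harmless: its neighbours have opposite signs, so whatever sign `D k` takes
-- nearby, the three terms contribute exactly one sign change.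
lemma eventually_signVar_eq (h : IsSturmChain D m) (hk : k ≤ m) {x : ℝ} (hx : D k x ≠ 0) :
    ∀ᶠ y in 𝓝 x, signVar (fun i => D i y) k = signVar (fun i => D i x) k := by
  have h0 (y : ℝ) : 0 ≤ D 0 y := (h.isSturmSequence y).zero_pos.le
  induction k using Nat.strong_induction_on with
  | _ k ih =>
  obtain _ | k := k
  · exact Eventually.of_forall fun _ => rfl
  by_cases hkx : D k x = 0
  · obtain ⟨i, rfl⟩ := (h.isSturmSequence x).exists_eq_succ hkx
    have hneg := (h.isSturmSequence x).mul_neg i hk hkx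
    have hcont : Continuous fun y => D i y * D (i + 2) y :=
      (h.continuous i (by omega)).mul (h.continuous (i + 2) hk)
    filter_upwards [hcont.continuousAt.eventually_lt_const hneg,
      ih i (by omega) (by omega) (left_ne_zero_of_mul hneg.ne)] with y hy hVy
    rw [signVar_add_two (h0 y) hy, signVar_add_two (h0 x) hneg, hVy]
  · have hVk := ih k (by omega) (by omega) hkx
    set v := signVar (fun i => D i x) k
    have hcont : Continuous fun y => (-1) ^ v * D (k + 1) y :=
      continuous_const.mul (h.continuous (k + 1) hk)
    rcases lt_or_gt_of_ne (mul_ne_zero (pow_ne_zero v (neg_ne_zero.2 one_ne_zero)) hx) with hs | hs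
    · filter_upwards [hcont.continuousAt.eventually_lt_const hs, hVk] with y hy hVy
      rw [signVar_succ_of_neg (by rwa [hVy]), signVar_succ_of_neg hs, hVy]
    · filter_upwards [hcont.continuousAt.eventually_const_lt hs, hVk] with y hy hVy
      rw [signVar_succ_of_nonneg (by rw [hVy]; exact hy.le), signVar_succ_of_nonneg hs.le, hVy]

lemma eventually_signVar_mem_Icc (h : IsSturmChain D m) (hk : k ≤ m) (x : ℝ) :
    ∀ᶠ y in 𝓝 x, signVar (fun i => D i y) k ∈
      Set.Icc (signVar (fun i => D i x) k) (signVar (fun i => D i x) k + 1) := by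
  by_cases hx : D k x = 0
  · obtain ⟨i, rfl⟩ := (h.isSturmSequence x).exists_eq_succ hx
    have hi : D i x ≠ 0 := (h.isSturmSequence x).ne_zero_of_succ_eq_zero hk hx
    filter_upwards [h.eventually_signVar_eq (by omega) hi] with y hy
    rw [signVar_succ_of_eq_zero hx, ← hy]
    exact ⟨signVar_le_succ _ i, signVar_succ_le _ i⟩
  · filter_upwards [h.eventually_signVar_eq hk hx] with y hy
    simp [hy]

lemma exists_zero_of_signVar_le (h : IsSturmChain D m) (hk : k ≤ m) {j : ℕ} (hj : j < k) {x : ℝ}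
    (hx : signVar (fun i => D i x) k ≤ j) :
    ∃ b, x ≤ b ∧ D k b = 0 ∧ signVar (fun i => D i b) k = j ∧
      ∀ y ∈ Set.Icc x b, signVar (fun i => D i y) k ≤ j := by
  let V (y : ℝ) : ℕ := signVar (fun i => D i y) k
  let S : Set ℝ := {y | x ≤ y ∧ j < V y}
  have hS : S.Nonempty := by
    obtain ⟨y, hxy, hy⟩ :=
      ((eventually_ge_atTop x).and (h.eventually_signVar_atTop hk)).exists
    exact ⟨y, hxy, hj.trans_eq hy.symm⟩
  have hbdd : BddBelow S := ⟨x, fun y hy => hy.1⟩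
  set b := sInf S
  have hxb : x ≤ b := le_csInf hS fun y hy => hy.1
  have hlt {y : ℝ} (hxy : x ≤ y) (hyb : y < b) : V y ≤ j :=
    not_lt.1 fun hy => notMem_of_lt_csInf hyb hbdd ⟨hxy, hy⟩
  have hnhds := h.eventually_signVar_mem_Icc hk b
  have hVb : V b ≤ j := by
    rcases hxb.eq_or_lt with hb | hb
    · rwa [← hb]
    obtain ⟨y, hy, hxy, hyb⟩ :=
      ((hnhds.filter_mono nhdsWithin_le_nhds).and (Ioo_mem_nhdsLT hb)).exists
    exact hy.1.trans (hlt hxy.le hyb)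
  have hfreq : ∃ᶠ y in 𝓝 b, y ∈ S :=
    ((isGLB_csInf hS hbdd).frequently_mem hS).filter_mono nhdsWithin_le_nhds
  refine ⟨b, hxb, ?_, ?_, fun y hy => hy.2.eq_or_lt.elim (· ▸ hVb) (hlt hy.1)⟩
  · by_contra hb
    obtain ⟨y, hy, hyb⟩ := (hfreq.and_eventually (h.eventually_signVar_eq hk hb)).exists
    exact (hy.2.trans_eq hyb).not_ge hVb
  · obtain ⟨y, hy, hyb⟩ := (hfreq.and_eventually hnhds).exists
    exact hVb.antisymm (Nat.lt_succ_iff.1 (hy.2.trans_le hyb.2))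

lemma range_eq_zeros (h : IsSturmChain D m) (hk : k ≤ m) {r : Fin k → ℝ}
    (hr : Function.Injective r) (hr0 : ∀ j, D k (r j) = 0) : Set.range r = {x | D k x = 0} := by
  refine (Set.finite_range r).eq_of_subset_of_encard_le (Set.range_subset_iff.2 hr0)
    ((h.encard_zeros_le k hk).trans_eq ?_)
  simp [← Set.image_univ, hr.encard_image]

theorem exists_strictMono_zeros (h : IsSturmChain D m) (hk : k ≤ m) :
    ∃ r : Fin k → ℝ, StrictMono r ∧ (∀ j, D k (r j) = 0) ∧
      ∀ (j : Fin k) (x : ℝ), signVar (fun i => D i x) k ≤ j ↔ x ≤ r j := by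
  obtain ⟨x₀, hx₀⟩ := Filter.eventually_atBot.1 (h.eventually_signVar_atBot hk)
  choose r _ hr0 hVr hVle using fun j : Fin k =>
    h.exists_zero_of_signVar_le hk j.isLt ((hx₀ x₀ le_rfl).trans_le (Nat.zero_le j))
  have hinj : Function.Injective r := fun i j hij => Fin.ext (by rw [← hVr i, ← hVr j, hij])
  have hle (j : Fin k) (x : ℝ) : signVar (fun i => D i x) k ≤ j ↔ x ≤ r j := by
    constructor
    · intro hx
      obtain ⟨b, hxb, hb0, hVb, -⟩ := h.exists_zero_of_signVar_le hk j.isLt hx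
      obtain ⟨i, rfl⟩ : b ∈ Set.range r := (h.range_eq_zeros hk hinj hr0).symm ▸ hb0
      rwa [show j = i from Fin.ext (by rw [← hVb, hVr])]
    · intro hx
      rcases le_total x x₀ with hx₀' | hx₀'
      · simp [hx₀ x hx₀']
      · exact hVle j x ⟨hx₀', hx⟩
  refine ⟨r, fun i j hij => lt_of_not_ge fun hji => ?_, hr0, hle⟩
  have := (hle i (r j)).2 hji
  rw [hVr] at this
  exact this.not_gt hij

lemma exists_nat_indexed_zeros (h : IsSturmChain D m) (hk : k ≤ m) :
    ∃ α : ℕ → ℝ, StrictMono (fun i : Fin k => α (i + 1)) ∧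
      (∀ j, 1 ≤ j → j ≤ k → D k (α j) = 0) ∧
      (∀ x, D k x = 0 → ∃ j, 1 ≤ j ∧ j ≤ k ∧ x = α j) ∧
      ∀ j, 1 ≤ j → j ≤ k → ∀ x, signVar (fun i => D i x) k < j ↔ x ≤ α j := by
  obtain ⟨r, hr, hr0, hle⟩ := h.exists_strictMono_zeros hk
  have hsucc : Function.Injective fun i : Fin k => (i : ℕ) + 1 := fun i j hij =>
    Fin.ext (Nat.succ.inj hij)
  let α : ℕ → ℝ := Function.extend (fun i : Fin k => (i : ℕ) + 1) r 0
  have hα (i : Fin k) : α (i + 1) = r i := hsucc.extend_apply r 0 i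
  have hindex {j : ℕ} (hj : 1 ≤ j) (hjk : j ≤ k) : ∃ i : Fin k, j = i + 1 :=
    ⟨⟨j - 1, by omega⟩, (Nat.sub_add_cancel hj).symm⟩
  refine ⟨α, by simpa only [hα] using hr, fun j hj hjk => ?_, fun x hx => ?_,
    fun j hj hjk x => ?_⟩
  · obtain ⟨i, rfl⟩ := hindex hj hjk
    rw [hα, hr0]
  · obtain ⟨i, rfl⟩ : x ∈ Set.range r := (h.range_eq_zeros hk hr.injective hr0).symm ▸ hx
    exact ⟨i + 1, by omega, i.isLt, (hα i).symm⟩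
  · obtain ⟨i, rfl⟩ := hindex hj hjk
    rw [hα, Nat.lt_succ_iff, hle]

theorem signVar_le_iff (h : IsSturmChain D m) (hk : k ≤ m) {r : Fin k → ℝ} (hr : StrictMono r)
    (hr0 : ∀ j, D k (r j) = 0) (j : Fin k) (x : ℝ) :
    signVar (fun i => D i x) k ≤ j ↔ x ≤ r j := by
  obtain ⟨z, hz, hz0, hle⟩ := h.exists_strictMono_zeros hk
  have hrange : Set.range r = Set.range z := by
    rw [h.range_eq_zeros hk hr.injective hr0, h.range_eq_zeros hk hz.injective hz0]
  rw [(hr.range_inj hz).1 hrange, hle]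

lemma signVar_zero_eq (h : IsSturmChain D m) (hk : k ≤ m) {r : Fin k → ℝ} (hr : StrictMono r)
    (hr0 : ∀ j, D k (r j) = 0) (j : Fin k) : signVar (fun i => D i (r j)) k = j := by
  refine ((h.signVar_le_iff hk hr hr0 j _).2 le_rfl).antisymm (not_lt.1 fun hlt => ?_)
  let i : Fin k := ⟨signVar (fun i => D i (r j)) k, hlt.trans j.isLt⟩
  have hji : r j ≤ r i := (h.signVar_le_iff hk hr hr0 i _).1 le_rfl
  exact (hr.le_iff_le.1 hji).not_gt hlt

theorem zeros_interlace (h : IsSturmChain D m) (hk : k + 1 ≤ m) {r : Fin k → ℝ}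
    (hr : StrictMono r) (hr0 : ∀ j, D k (r j) = 0) {s : Fin (k + 1) → ℝ} (hs : StrictMono s)
    (hs0 : ∀ j, D (k + 1) (s j) = 0) (j : Fin k) : s j.castSucc < r j ∧ r j < s j.succ := by
  have hV : signVar (fun i => D i (r j)) (k + 1) = j + 1 := by
    rw [(h.isSturmSequence (r j)).signVar_succ_of_left_eq_zero hk (hr0 j),
      h.signVar_zero_eq (by omega) hr hr0 j]
  have hle (i : Fin (k + 1)) := h.signVar_le_iff hk hs hs0 i (r j)
  rw [hV] at hle
  refine ⟨not_le.1 fun hrs => ?_, ((hle j.succ).1 (by simp)).lt_of_ne fun hrs => ?_⟩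
  · simpa using (hle j.castSucc).2 hrs
  · exact (h.isSturmSequence (r j)).ne_zero_of_succ_eq_zero hk (hrs ▸ hs0 j.succ) (hr0 j)

end IsSturmChain

/-- The three-term recurrence satisfied by the leading principal minors `D k` of a Jacobi pencil
with diagonal `p k - q k * x` and off-diagonal products `c k`; positivity of the coefficients is
only required as far as they enter `D 0, …, D m`. -/
structure IsJacobiRecurrence (p q c : ℕ → ℝ) (m : ℕ) (D : ℕ → ℝ → ℝ) : Prop where
  q_pos : ∀ k < m, 0 < q k
  c_pos : ∀ k, k + 2 ≤ m → 0 < c k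
  zero : ∀ x, D 0 x = 1
  one : ∀ x, D 1 x = p 0 - q 0 * x
  add_two : ∀ k x, D (k + 2) x = (p (k + 1) - q (k + 1) * x) * D (k + 1) x - c k * D k x

lemma eventually_pos_of_recurrence {α : Type*} {l : Filter α} {a E : ℕ → α → ℝ} {c : ℕ → ℝ} {m : ℕ}
    (hc : ∀ k, k + 2 ≤ m → 0 < c k) (ha : ∀ k < m, Tendsto (a k) l atTop)
    (h0 : ∀ x, E 0 x = 1) (h1 : ∀ x, E 1 x = a 0 x)
    (h2 : ∀ k x, E (k + 2) x = a (k + 1) x * E (k + 1) x - c k * E k x) {k : ℕ} (hk : k ≤ m) :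
    ∀ᶠ x in l, 0 < E k x := by
  -- The stronger claim `E k ≤ E (k + 1)` absorbs the subtracted term once `a (k + 1) ≥ 1 + c k`.
  have key (k : ℕ) (hk : k + 1 ≤ m) : ∀ᶠ x in l, 0 < E k x ∧ E k x ≤ E (k + 1) x := by
    induction k with
    | zero =>
      filter_upwards [(ha 0 hk).eventually_ge_atTop 1] with x hx
      simpa [h0, h1] using hx
    | succ k ih =>
      filter_upwards [ih (by omega), (ha (k + 1) hk).eventually_ge_atTop (1 + c k)] with x hE hx
      have hpos : 0 < E (k + 1) x := hE.1.trans_le hE.2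
      refine ⟨hpos, ?_⟩
      have hmain := mul_le_mul_of_nonneg_right hx hpos.le
      have hsub := mul_le_mul_of_nonneg_left hE.2 (hc k hk).le
      rw [h2]
      linarith
  obtain _ | k := k
  · exact Eventually.of_forall fun x => by simp [h0]
  · filter_upwards [key k hk] with x hx using hx.1.trans_le hx.2

namespace IsJacobiRecurrence

variable {p q c : ℕ → ℝ} {m k : ℕ} {D : ℕ → ℝ → ℝ}

lemma exists_polynomial (h : IsJacobiRecurrence p q c m D) (k : ℕ) :
    ∃ P : ℝ[X], P.natDegree ≤ k ∧ ∀ x, P.eval x = D k x := by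
  induction k using Nat.twoStepInduction with
  | zero => exact ⟨1, by simp, by simp [h.zero]⟩
  | one => exact ⟨C (p 0) - C (q 0) * X, by compute_degree, by simp [h.one]⟩
  | more k ih ih' =>
    obtain ⟨P, hP, hPD⟩ := ih
    obtain ⟨Q, hQ, hQD⟩ := ih'
    refine ⟨(C (p (k + 1)) - C (q (k + 1)) * X) * Q - C (c k) * P, ?_,
      fun x => by simp [h.add_two, hPD, hQD]⟩
    have hlin : (C (p (k + 1)) - C (q (k + 1)) * X).natDegree ≤ 1 := by compute_degree
    have hmul : ((C (p (k + 1)) - C (q (k + 1)) * X) * Q).natDegree ≤ k + 2 :=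
      (natDegree_mul_le_of_le hlin hQ).trans (by omega)
    have hsub : (C (c k) * P).natDegree ≤ k + 2 := (natDegree_C_mul_le _ _).trans (by omega)
    exact (natDegree_sub_le_of_le hmul hsub).trans (max_self _).le

lemma continuous (h : IsJacobiRecurrence p q c m D) (k : ℕ) : Continuous (D k) := by
  obtain ⟨P, -, hP⟩ := h.exists_polynomial k
  exact P.continuous.congr hP

lemma ne_zero_of_succ_eq_zero (h : IsJacobiRecurrence p q c m D) (hk : k + 1 ≤ m) {x : ℝ}
    (hx : D (k + 1) x = 0) : D k x ≠ 0 := by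
  induction k with
  | zero => simp [h.zero]
  | succ k ih =>
    intro hx'
    refine ih (by omega) hx' ?_
    simpa [hx, hx', (h.c_pos k hk).ne'] using h.add_two k x

lemma isSturmSequence (h : IsJacobiRecurrence p q c m D) (x : ℝ) :
    IsSturmSequence (fun k => D k x) m := by
  refine ⟨by simp [h.zero], fun k hk hx => ?_⟩
  have hsq : 0 < D k x * D k x := mul_self_pos.2 (h.ne_zero_of_succ_eq_zero (by omega) hx)
  calc D k x * D (k + 2) x = -(c k * (D k x * D k x)) := by rw [h.add_two, hx]; ring
    _ < 0 := neg_neg_of_pos (mul_pos (h.c_pos k hk) hsq)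

lemma eventually_atBot (h : IsJacobiRecurrence p q c m D) (hk : k ≤ m) :
    ∀ᶠ x in atBot, 0 < D k x := by
  refine eventually_pos_of_recurrence (a := fun i x => p i - q i * x) h.c_pos (fun i hi => ?_)
    h.zero h.one h.add_two hk
  have hlin : Tendsto (fun x => -(q i * x)) atBot atTop :=
    tendsto_neg_atBot_atTop.comp (tendsto_id.const_mul_atBot (h.q_pos i hi))
  simpa only [sub_eq_add_neg] using tendsto_atTop_add_const_left _ (p i) hlin

lemma eventually_atTop (h : IsJacobiRecurrence p q c m D) (hk : k ≤ m) :
    ∀ᶠ x in atTop, 0 < (-1) ^ k * D k x := by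
  refine eventually_pos_of_recurrence (a := fun i x => q i * x - p i)
    (E := fun i x => (-1) ^ i * D i x) h.c_pos (fun i hi => ?_) (by simp [h.zero])
    (by simp [h.one]) (fun i x => by rw [h.add_two]; ring) hk
  exact tendsto_atTop_add_const_right _ _ (tendsto_id.const_mul_atTop (h.q_pos i hi))

lemma encard_zeros_le (h : IsJacobiRecurrence p q c m D) (hk : k ≤ m) :
    {x | D k x = 0}.encard ≤ k := by
  obtain ⟨P, hdeg, hP⟩ := h.exists_polynomial k
  have hP0 : P ≠ 0 := by
    rintro rfl
    obtain ⟨x, hx⟩ := (h.eventually_atBot hk).exists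
    simp [← hP] at hx
  have hzeros : {x | D k x = 0} = P.roots.toFinset := by
    ext x
    simp [← hP, hP0]
  rw [hzeros, Set.encard_coe_eq_coe_finsetCard]
  exact_mod_cast (P.roots.toFinset_card_le.trans P.card_roots').trans hdeg

theorem isSturmChain (h : IsJacobiRecurrence p q c m D) : IsSturmChain D m where
  isSturmSequence := h.isSturmSequence
  continuous k _ := h.continuous k
  encard_zeros_le _ := h.encard_zeros_le
  eventually_atBot _ := h.eventually_atBot
  eventually_atTop _ := h.eventually_atTop

end IsJacobiRecurrence

end Sturm

/-! ### The minors of the path matrix -/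

lemma det_succ_succ_of_tridiagonal {R : Type*} [CommRing R] {k : ℕ}
    (M : Matrix (Fin (k + 2)) (Fin (k + 2)) R)
    (hrow : ∀ i : Fin k, M (Fin.last (k + 1)) i.castSucc.castSucc = 0)
    (hcol : ∀ i : Fin k, M i.castSucc.castSucc (Fin.last (k + 1)) = 0) :
    M.det = M (Fin.last (k + 1)) (Fin.last (k + 1)) * (M.submatrix Fin.castSucc Fin.castSucc).det -
      M (Fin.last (k + 1)) (Fin.last k).castSucc * M (Fin.last k).castSucc (Fin.last (k + 1)) *
        (M.submatrix (fun i : Fin k => i.castSucc.castSucc)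
          (fun i => i.castSucc.castSucc)).det := by
  have hcast (i : Fin k) : (Fin.last k).castSucc.succAbove i.castSucc = i.castSucc.castSucc :=
    Fin.succAbove_of_castSucc_lt _ _ (by simp [Fin.lt_def])
  have hlast : (Fin.last k).castSucc.succAbove (Fin.last k) = Fin.last (k + 1) := by
    simp [Fin.succAbove]
  have hminor : (M.submatrix Fin.castSucc (Fin.last k).castSucc.succAbove).det =
      M (Fin.last k).castSucc (Fin.last (k + 1)) *
        (M.submatrix (fun i : Fin k => i.castSucc.castSucc)
          (fun i => i.castSucc.castSucc)).det := by
    rw [Matrix.det_succ_column _ (Fin.last k), Fin.sum_univ_castSucc, Finset.sum_eq_zero]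
    · simp [hlast, hcast, Matrix.submatrix_submatrix, Function.comp_def, ← two_mul]
    · simp [hlast, hcol]
  rw [Matrix.det_succ_row _ (Fin.last (k + 1)), Fin.sum_univ_castSucc, Fin.sum_univ_castSucc,
    Finset.sum_eq_zero (fun i _ => by rw [hrow]; ring)]
  simp only [Fin.succAbove_last, hminor, Fin.val_last, Fin.val_castSucc]
  have hodd : (-1 : R) ^ (k + 1 + k) = -1 := Odd.neg_one_pow ⟨k, by ring⟩
  have heven : (-1 : R) ^ (k + 1 + (k + 1)) = 1 := Even.neg_one_pow ⟨k + 1, rfl⟩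
  rw [hodd, heven]
  ring

lemma det_Amat_add_two (π ν : ℕ → ℝ) (k : ℕ) (x : ℝ) :
    (Amat π ν (k + 2) x).det =
      (1 + π (k + 3) / π (k + 2) - x * π (k + 3) / ν (k + 2)) * (Amat π ν (k + 1) x).det -
        π (k + 3) / π (k + 2) * (Amat π ν k x).det := by
  have hsub : (Amat π ν (k + 2) x).submatrix Fin.castSucc Fin.castSucc = Amat π ν (k + 1) x := rfl
  have hsub' : (Amat π ν (k + 2) x).submatrix (fun i : Fin k => i.castSucc.castSucc)
      (fun i => i.castSucc.castSucc) = Amat π ν k x := rfl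
  have hdiag : Amat π ν (k + 2) x (Fin.last (k + 1)) (Fin.last (k + 1)) =
      1 + π (k + 3) / π (k + 2) - x * π (k + 3) / ν (k + 2) := if_pos rfl
  have hlow : Amat π ν (k + 2) x (Fin.last (k + 1)) (Fin.last k).castSucc =
      π (k + 3) / π (k + 2) := by simp [Amat, add_assoc]
  have hupp : Amat π ν (k + 2) x (Fin.last k).castSucc (Fin.last (k + 1)) = 1 := by simp [Amat]
  rw [det_succ_succ_of_tridiagonal, hsub, hsub', hdiag, hlow, hupp, mul_one]
  · intro i
    have := i.isLt
    simp only [Amat, Matrix.of_apply, Fin.val_last, Fin.val_castSucc]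
    grind
  · intro i
    have := i.isLt
    simp only [Amat, Matrix.of_apply, Fin.val_last, Fin.val_castSucc]
    grind

lemma isJacobiRecurrence_det_Amat {π ν : ℕ → ℝ} {m : ℕ} (hπ : ∀ i ∈ Finset.Icc 1 (m + 1), 0 < π i)
    (hν : ∀ i ∈ Finset.Icc 1 m, 0 < ν i) :
    IsJacobiRecurrence (fun k => 1 + π (k + 2) / π (k + 1)) (fun k => π (k + 2) / ν (k + 1))
      (fun k => π (k + 3) / π (k + 2)) m (fun k x => (Amat π ν k x).det) where
  q_pos k hk := div_pos (hπ _ (by grind)) (hν _ (by grind))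
  c_pos k hk := div_pos (hπ _ (by grind)) (hπ _ (by grind))
  zero x := Matrix.det_fin_zero
  one x := by
    rw [Matrix.det_fin_one]
    simp only [Amat, Matrix.of_apply, Fin.val_zero, if_true]
    ring
  add_two k x := by
    rw [det_Amat_add_two]
    ring

/-- The flow of `f` across the edge `{k, k + 1}`: the increment of `f` weighted by `ν k`. -/
def flux (ν f : ℕ → ℝ) (k : ℕ) : ℝ := (f (k + 1) - f k) * ν k

/-- The first `m` of the equations `M f = lam • f`, written as a conservation law for the flux. -/
def IsFluxSolution (π ν : ℕ → ℝ) (lam : ℝ) (f : ℕ → ℝ) (m : ℕ) : Prop :=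
  ∀ k < m, flux ν f (k + 1) = flux ν f k - lam * (π (k + 1) * f (k + 1))

lemma IsEigen.isFluxSolution {n : ℕ} {π ν ζ : ℕ → ℝ} {lam : ℝ} (h : IsEigen n π ν lam ζ) :
    IsFluxSolution π ν lam ζ n := by
  intro k hk
  have := h.2 (k + 1) (by grind)
  simp only [flux, Nat.add_sub_cancel] at this ⊢
  linarith

lemma XiRec.isFluxSolution {m : ℕ} {π ν ξ : ℕ → ℝ} {lam : ℝ}
    (hν : ∀ i ∈ Finset.Icc 1 m, 0 < ν i) (h : XiRec (m + 1) π ν lam ξ) :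
    IsFluxSolution π ν lam ξ m := by
  intro k hk
  have hνk : ν (k + 1) ≠ 0 := (hν (k + 1) (by grind)).ne'
  have := h.2 (k + 1) (by omega) (by omega)
  rw [flux, this, add_sub_cancel_left, div_mul_cancel₀ _ hνk]
  rfl

namespace IsFluxSolution

variable {π ν f : ℕ → ℝ} {lam : ℝ} {m k : ℕ}

-- Dividing the `(k + 1)`-st equation by `π (k + 1)` eliminates `f` in favour of the flux.
lemma flux_add_two (h : IsFluxSolution π ν lam f m) (hk : k + 2 ≤ m) (hπ : π (k + 1) ≠ 0)
    (hν : ν (k + 1) ≠ 0) :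
    flux ν f (k + 2) =
      (1 + π (k + 2) / π (k + 1) - lam * π (k + 2) / ν (k + 1)) * flux ν f (k + 1) -
        π (k + 2) / π (k + 1) * flux ν f k := by
  have hf : lam * f (k + 1) = (flux ν f k - flux ν f (k + 1)) / π (k + 1) := by
    rw [h k (by omega)]
    field_simp
    ring
  have hf' : f (k + 2) = f (k + 1) + flux ν f (k + 1) / ν (k + 1) := by
    rw [flux, mul_div_cancel_right₀ _ hν]
    ring
  calc flux ν f (k + 2) = flux ν f (k + 1) - π (k + 2) * (lam * f (k + 1)) -
        lam * π (k + 2) / ν (k + 1) * flux ν f (k + 1) := by rw [h (k + 1) hk, hf']; ring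
    _ = _ := by rw [hf]; ring

theorem flux_eq_mul_det (h : IsFluxSolution π ν lam f m) (hν0 : ν 0 = 0)
    (hπ : ∀ i ∈ Finset.Icc 1 m, 0 < π i) (hν : ∀ i ∈ Finset.Ico 1 m, 0 < ν i) (hk : k < m) :
    flux ν f (k + 1) = -(lam * π 1 * f 1) * (Amat π ν k lam).det := by
  have hflux0 : flux ν f 0 = 0 := by simp [flux, hν0]
  have hflux1 (hm : 0 < m) : flux ν f 1 = -(lam * π 1 * f 1) := by
    rw [h 0 hm, hflux0]
    ring
  have hrec (k : ℕ) (hk : k + 2 ≤ m) := h.flux_add_two hk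
    (hπ (k + 1) (by grind)).ne' (hν (k + 1) (by grind)).ne'
  induction k using Nat.twoStepInduction with
  | zero => simp [hflux1 hk]
  | one =>
    rw [hrec 0 hk, hflux0, hflux1 (by omega), Matrix.det_fin_one]
    simp only [Amat, Matrix.of_apply, Fin.val_zero, if_true]
    ring
  | more k ih ih' =>
    rw [hrec (k + 1) hk, ih (by omega), ih' (by omega), det_Amat_add_two]
    ring

end IsFluxSolution

theorem IsEigen.det_Amat_eq_zero {m : ℕ} {π ν ζ : ℕ → ℝ} {lam : ℝ}
    (h : IsEigen (m + 1) π ν lam ζ) (hlam : lam ≠ 0) (hπ : ∀ i ∈ Finset.Icc 1 (m + 1), 0 < π i)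
    (hν : ∀ i ∈ Finset.Icc 1 m, 0 < ν i) (hν0 : ν 0 = 0) (hνm : ν (m + 1) = 0) :
    (Amat π ν m lam).det = 0 := by
  have hflux := h.isFluxSolution
  have hdet (k : ℕ) (hk : k < m + 1) := hflux.flux_eq_mul_det hν0 hπ (fun i hi => hν i hi) hk
  have hend : flux ν ζ (m + 1) = 0 := by simp [flux, hνm]
  have hζ1 : ζ 1 ≠ 0 := by
    intro hζ1
    have hzero (k : ℕ) (hk : k ≤ m + 1) : flux ν ζ k = 0 := by
      obtain _ | k := k
      · simp [flux, hν0]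
      · simp [hdet k hk, hζ1]
    obtain ⟨⟨k, hk, hζk⟩, -⟩ := h
    obtain ⟨hk1, hkm⟩ := Finset.mem_Icc.1 hk
    obtain ⟨k, rfl⟩ := Nat.exists_eq_add_of_le' hk1
    have := hflux k hkm
    rw [hzero _ hkm, hzero k (by omega)] at this
    simp [hlam, (hπ _ hk).ne', hζk] at this
  simpa [hend, hlam, hζ1, (hπ 1 (by simp)).ne'] using hdet m (by omega)

/-! ### Monotone runs -/

lemma strictMonoOn_Icc_add_one {α : Type*} [Preorder α] {f : ℕ → α} {a n : ℕ}
    (h : StrictMonoOn f (Set.Icc a n)) (hf : f n < f (n + 1)) :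
    StrictMonoOn f (Set.Icc a (n + 1)) := by
  refine strictMonoOn_of_lt_add_one Set.ordConnected_Icc fun k _ hk hk' => ?_
  rcases (Nat.le_of_succ_le_succ hk'.2).eq_or_lt with rfl | hkn
  · exact hf
  · exact h ⟨hk.1, hkn.le⟩ ⟨hk'.1, hkn⟩ k.lt_succ_self

lemma strictAntiOn_Icc_add_one {α : Type*} [Preorder α] {f : ℕ → α} {a n : ℕ}
    (h : StrictAntiOn f (Set.Icc a n)) (hf : f (n + 1) < f n) :
    StrictAntiOn f (Set.Icc a (n + 1)) :=
  strictMonoOn_Icc_add_one (α := αᵒᵈ) h hf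

namespace IsTypeWith

variable {n i : ℕ} {f : ℕ → ℝ} {a b : ℕ → ℕ}

lemma of_lt (h : f 1 < f 2) : IsTypeWith 2 f 1 (fun _ => 1) (fun _ => 2) := by
  have hmono : StrictMonoOn f (Set.Icc 1 2) :=
    strictMonoOn_Icc_add_one ((Set.subsingleton_Icc_of_ge le_rfl).strictMonoOn f) h
  exact ⟨rfl, le_rfl, by simp, by omega, fun _ _ _ => .inl hmono, by omega, by omega,
    fun k hk hk' => by rw [hk.antisymm hk']⟩

lemma add_one_of_eq (h : IsTypeWith n f i a b) (hf : f (n + 1) = f n) :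
    IsTypeWith (n + 1) f i a b := by
  obtain ⟨ha1, hbn, hab, hba, hmono, halt, hval, hconst⟩ := h
  refine ⟨ha1, hbn.trans n.le_succ, hab, hba, hmono, halt, hval, fun k hk hkn => ?_⟩
  rcases hkn.eq_or_lt with rfl | hkn
  · exact hf.trans (hconst n hbn le_rfl)
  · exact hconst k hk (Nat.le_of_lt_succ hkn)

lemma add_one_of_mul_pos (h : IsTypeWith n f i a b) (hi : 1 ≤ i) (hb : b i = n)
    (hf : 0 < (f (a i + 1) - f (a i)) * (f (n + 1) - f n)) :
    IsTypeWith (n + 1) f i a (Function.update b i (n + 1)) := by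
  obtain ⟨ha1, -, hab, hba, hmono, halt, hval, -⟩ := h
  have hbi : Function.update b i (n + 1) i = n + 1 := Function.update_self ..
  have hbj (j : ℕ) (hj : j < i) : Function.update b i (n + 1) j = b j :=
    Function.update_of_ne hj.ne ..
  have hai : a i < n := hb ▸ hab i hi le_rfl
  have hlast : StrictMonoOn f (Set.Icc (a i) (n + 1)) ∨ StrictAntiOn f (Set.Icc (a i) (n + 1)) := by
    have ha : a i ∈ Set.Icc (a i) n := ⟨le_rfl, hai.le⟩
    have ha' : a i + 1 ∈ Set.Icc (a i) n := ⟨by omega, hai⟩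
    refine (hb ▸ hmono i hi le_rfl).imp (fun hup => ?_) fun hdown => ?_
    · exact strictMonoOn_Icc_add_one hup
        (sub_pos.1 (pos_of_mul_pos_right hf (sub_pos.2 (hup ha ha' (by omega))).le))
    · exact strictAntiOn_Icc_add_one hdown
        (sub_neg.1 (neg_of_mul_pos_right hf (sub_neg.2 (hdown ha ha' (by omega))).le))
  refine ⟨ha1, hbi.le, fun j hj hji => ?_, fun j hj hji => ?_, fun j hj hji => ?_, halt,
    fun j hj hji => ?_, fun k hk hkn => ?_⟩
  · rcases hji.eq_or_lt with rfl | hji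
    · omega
    · exact hbj j hji ▸ hab j hj hji.le
  · exact hbj j hji ▸ hba j hj hji
  · rcases hji.eq_or_lt with rfl | hji
    · rwa [hbi]
    · exact hbj j hji ▸ hmono j hj hji.le
  · exact hbj j hji ▸ hval j hj hji
  · rw [hbi] at hk ⊢
    rw [hkn.antisymm hk]

lemma add_one_of_mul_neg (h : IsTypeWith n f i a b) (hi : 1 ≤ i) (hb : n ≤ b i + 1)
    (hf : (f (a i + 1) - f (a i)) * (f (n + 1) - f n) < 0) :
    IsTypeWith (n + 1) f (i + 1) (Function.update a (i + 1) n)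
      (Function.update b (i + 1) (n + 1)) := by
  obtain ⟨ha1, hbn, hab, hba, hmono, halt, hval, hconst⟩ := h
  have ha' : Function.update a (i + 1) n (i + 1) = n := Function.update_self ..
  have hb' : Function.update b (i + 1) (n + 1) (i + 1) = n + 1 := Function.update_self ..
  have haj (j : ℕ) (hj : j ≤ i) : Function.update a (i + 1) n j = a j :=
    Function.update_of_ne (by omega) ..
  have hbj (j : ℕ) (hj : j ≤ i) : Function.update b (i + 1) (n + 1) j = b j :=
    Function.update_of_ne (by omega) ..
  have hlast : StrictMonoOn f (Set.Icc n (n + 1)) ∨ StrictAntiOn f (Set.Icc n (n + 1)) := by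
    have hn : (Set.Icc n n).Subsingleton := Set.subsingleton_Icc_of_ge le_rfl
    rcases lt_or_gt_of_ne (right_ne_zero_of_mul hf.ne) with hdown | hup
    · exact .inr (strictAntiOn_Icc_add_one (hn.strictAntiOn f) (sub_neg.1 hdown))
    · exact .inl (strictMonoOn_Icc_add_one (hn.strictMonoOn f) (sub_pos.1 hup))
  refine ⟨by rw [haj 1 hi, ha1], hb'.le, fun j hj hji => ?_, fun j hj hji => ?_,
    fun j hj hji => ?_, fun j hj hji => ?_, fun j hj hji => ?_, fun k hk hkn => ?_⟩
  · rcases Nat.le_add_one_iff.1 hji with hji | rfl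
    · exact haj j hji ▸ hbj j hji ▸ hab j hj hji
    · omega
  · rcases (Nat.le_of_lt_succ hji).eq_or_lt with rfl | hji
    · rw [ha', hbj j le_rfl]; exact ⟨hbn, hb⟩
    · rw [haj (j + 1) hji, hbj j hji.le]; exact hba j hj hji
  · rcases Nat.le_add_one_iff.1 hji with hji | rfl
    · exact haj j hji ▸ hbj j hji ▸ hmono j hj hji
    · rwa [ha', hb']
  · rcases (Nat.le_of_lt_succ hji).eq_or_lt with rfl | hji
    · rw [ha', haj j le_rfl]; linarith
    · rw [haj (j + 1) hji, haj j hji.le]; exact halt j hj hji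
  · rcases (Nat.le_of_lt_succ hji).eq_or_lt with rfl | hji
    · rw [ha', hbj j le_rfl]; exact hconst n hbn le_rfl
    · rw [haj (j + 1) hji, hbj j hji.le]; exact hval j hj hji
  · rw [hb'] at hk ⊢
    rw [hkn.antisymm hk]

end IsTypeWith

lemma IsSturmSequence.exists_isTypeWith {f : ℕ → ℝ} {m k : ℕ}
    (h : IsSturmSequence (fun k => f (k + 2) - f (k + 1)) m) (hk : k ≤ m) :
    ∃ v a b, signVar (fun k => f (k + 2) - f (k + 1)) k = v ∧ IsTypeWith (k + 2) f (v + 1) a b ∧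
      0 < (-1) ^ v * (f (a (v + 1) + 1) - f (a (v + 1))) ∧ k + 1 ≤ b (v + 1) ∧
      (f (k + 2) - f (k + 1) ≠ 0 → b (v + 1) = k + 2) := by
  induction k with
  | zero =>
    have hlt : 0 < f 2 - f 1 := h.zero_pos
    exact ⟨0, _, _, rfl, .of_lt (sub_pos.1 hlt), by simpa using hlt, by simp, by simp⟩
  | succ k ih =>
    obtain ⟨v, a, b, hv, htype, hrun, hb, hb'⟩ := ih (by omega)
    set d : ℕ → ℝ := fun k => f (k + 2) - f (k + 1)
    have hprod (x y : ℝ) : (-1) ^ v * x * ((-1) ^ v * y) = x * y := by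
      rw [mul_mul_mul_comm, ← mul_pow]; simp
    rcases lt_trichotomy ((-1) ^ v * d (k + 1)) 0 with hneg | hzero | hpos
    · refine ⟨v + 1, _, _, by rw [signVar_succ_of_neg (hv ▸ hneg), hv],
        htype.add_one_of_mul_neg (by omega) (by omega) ?_, ?_, ?_, fun _ => ?_⟩
      · rw [← hprod]; exact mul_neg_of_pos_of_neg hrun hneg
      · simpa [pow_succ] using hneg
      · simp
      · simp
    · have hd : d (k + 1) = 0 := by simpa using hzero
      have hdk : d k ≠ 0 := h.ne_zero_of_succ_eq_zero hk hd
      exact ⟨v, a, b, by rw [signVar_succ_of_eq_zero hd, hv],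
        htype.add_one_of_eq (sub_eq_zero.1 hd), hrun, (hb' hdk).ge, fun hd' => absurd hd hd'⟩
    · have hV : signVar d (k + 1) = v := by rw [signVar_succ_of_nonneg (hv ▸ hpos.le), hv]
      -- After a zero increment the sign changes, so a run is only ever prolonged from its end.
      have hdk : d k ≠ 0 := fun hdk => by
        have := h.signVar_succ_of_left_eq_zero hk hdk
        omega
      refine ⟨v, a, _, hV, htype.add_one_of_mul_pos (by omega) (hb' hdk) ?_, hrun, ?_, fun _ => ?_⟩
      · rw [← hprod]; exact mul_pos hrun hpos
      · simp
      · simp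

theorem IsSturmSequence.isType {f : ℕ → ℝ} {m : ℕ}
    (h : IsSturmSequence (fun k => f (k + 2) - f (k + 1)) m) :
    IsType (m + 2) f (signVar (fun k => f (k + 2) - f (k + 1)) m + 1) := by
  obtain ⟨v, a, b, rfl, htype, -⟩ := h.exists_isTypeWith le_rfl
  exact ⟨a, b, htype⟩

/-! ### Zeros, eigenvalues and types -/

lemma XiRec.sub_eq_mul_det {m k : ℕ} {π ν ξ : ℕ → ℝ} {lam : ℝ} (h : XiRec (m + 2) π ν lam ξ)
    (hπ : ∀ i ∈ Finset.Icc 1 (m + 1), 0 < π i) (hν : ∀ i ∈ Finset.Icc 1 (m + 1), 0 < ν i)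
    (hν0 : ν 0 = 0) (hk : k ≤ m) :
    ξ (k + 2) - ξ (k + 1) = lam * π 1 / ν (k + 1) * (Amat π ν k lam).det := by
  have hflux := (h.isFluxSolution hν).flux_eq_mul_det hν0 hπ
    (fun i hi => hν i (Finset.Ico_subset_Icc_self hi)) (Nat.lt_succ_of_le hk)
  rw [flux, h.1] at hflux
  have hνk : ν (k + 1) ≠ 0 := (hν (k + 1) (by grind)).ne'
  field_simp
  linarith

theorem XiRec.isType {m : ℕ} {π ν ξ : ℕ → ℝ} {lam : ℝ} (h : XiRec (m + 2) π ν lam ξ)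
    (hlam : 0 < lam) (hπ : ∀ i ∈ Finset.Icc 1 (m + 1), 0 < π i)
    (hν : ∀ i ∈ Finset.Icc 1 (m + 1), 0 < ν i) (hν0 : ν 0 = 0) :
    IsType (m + 2) ξ (signVar (fun k => (Amat π ν k lam).det) m + 1) := by
  have hpos (k : ℕ) (hk : k ≤ m) : 0 < lam * π 1 / ν (k + 1) :=
    div_pos (mul_pos hlam (hπ 1 (by simp))) (hν (k + 1) (by grind))
  have hdiff (k : ℕ) (hk : k ≤ m) := h.sub_eq_mul_det hπ hν hν0 hk
  have hsturm : IsSturmSequence (fun k => (Amat π ν k lam).det) m :=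
    (isJacobiRecurrence_det_Amat hπ fun i hi => hν i
      (Finset.Icc_subset_Icc_right m.le_succ hi)).isSturmSequence lam
  rw [← signVar_eq_of_eq_mul hpos hdiff]
  exact (hsturm.of_eq_mul hpos hdiff).isType

lemma eigenvalues_interlace_zeros {m : ℕ} {π ν lamG α : ℕ → ℝ}
    (hπ : ∀ i ∈ Finset.Icc 1 (m + 2), 0 < π i) (hν : ∀ i ∈ Finset.Icc 1 (m + 1), 0 < ν i)
    (hν0 : ν 0 = 0) (hνm : ν (m + 2) = 0) (hlamG0 : lamG 0 = 0)
    (hlamGmono : StrictMonoOn lamG (Set.Iic (m + 1)))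
    (hlamGeig : ∀ j, j ≤ m + 1 → ∃ ζ : ℕ → ℝ, IsEigen (m + 2) π ν (lamG j) ζ)
    (hα : StrictMono fun i : Fin m => α (i + 1))
    (hα0 : ∀ j, 1 ≤ j → j ≤ m → (Amat π ν m (α j)).det = 0) {j : ℕ} (hj : 1 ≤ j) (hjm : j ≤ m) :
    lamG j < α j ∧ α j < lamG (j + 1) := by
  have hchain := (isJacobiRecurrence_det_Amat hπ hν).isSturmChain
  have hmono : StrictMono fun i : Fin (m + 2) => lamG i :=
    fun i j hij => hlamGmono i.is_le j.is_le hij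
  have hzero (i : Fin (m + 1)) : (Amat π ν (m + 1) (lamG (i + 1))).det = 0 := by
    obtain ⟨ζ, hζ⟩ := hlamGeig (i + 1) i.isLt
    have hpos : 0 < lamG (i + 1) := hlamG0.symm.trans_lt (hmono i.succ_pos)
    exact hζ.det_Amat_eq_zero hpos.ne' hπ hν hν0 hνm
  obtain ⟨j, rfl⟩ := Nat.exists_eq_add_of_le' hj
  exact hchain.zeros_interlace le_rfl hα (fun i => hα0 (i + 1) (by omega) i.isLt)
    (hmono.comp Fin.strictMono_succ) hzero ⟨j, hjm⟩

theorem stmt8_general (n : ℕ) (hn : 2 ≤ n) (π ν : ℕ → ℝ)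
    (hπ : ∀ i ∈ Finset.Icc 1 n, 0 < π i)
    (hν : ∀ i ∈ Finset.Icc 1 (n - 1), 0 < ν i)
    (hν0 : ν 0 = 0) (hνn : ν n = 0)
    (lamG : ℕ → ℝ) (hlamG0 : lamG 0 = 0)
    (hlamGmono : ∀ j, j + 1 ≤ n - 1 → lamG j < lamG (j + 1))
    (hlamGeig : ∀ j, j ≤ n - 1 → ∃ ζ : ℕ → ℝ, IsEigen n π ν (lamG j) ζ)
    (ξ : ℝ → ℕ → ℝ) (hξ : ∀ lam : ℝ, XiRec n π ν lam (ξ lam)) :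
    ∃ α : ℕ → ℝ,
      (∀ j, 1 ≤ j → j ≤ n - 2 → Matrix.det (Amat π ν (n - 2) (α j)) = 0) ∧
      (∀ x : ℝ, Matrix.det (Amat π ν (n - 2) x) = 0 →
        ∃ j, 1 ≤ j ∧ j ≤ n - 2 ∧ x = α j) ∧
      (∀ j, 1 ≤ j → j + 1 ≤ n - 2 → α j < α (j + 1)) ∧
      (∀ j, 1 ≤ j → j ≤ n - 2 → lamG j < α j ∧ α j < lamG (j + 1)) ∧
      (∀ j, 1 ≤ j → j ≤ n - 1 → ∀ lam : ℝ,
        ((j = 1 ∧ 0 < lam) ∨ (2 ≤ j ∧ α (j - 1) < lam)) →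
        (j = n - 1 ∨ lam ≤ α j) →
        IsType n (ξ lam) j) := by
  obtain ⟨m, rfl⟩ := Nat.exists_eq_add_of_le' hn
  obtain ⟨α, hmono, hzero, hexact, hsignVar⟩ :=
    (isJacobiRecurrence_det_Amat hπ hν).isSturmChain.exists_nat_indexed_zeros m.le_succ
  have hlamG : StrictMonoOn lamG (Set.Iic (m + 1)) :=
    strictMonoOn_of_lt_add_one Set.ordConnected_Iic fun j _ _ hj => hlamGmono j hj
  have hinterlace (j : ℕ) (hj : 1 ≤ j) (hjm : j ≤ m) : lamG j < α j ∧ α j < lamG (j + 1) :=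
    eigenvalues_interlace_zeros hπ hν hν0 hνn hlamG0 hlamG hlamGeig hmono hzero hj hjm
  have hα (j : ℕ) (hj : 1 ≤ j) (hjm : j ≤ m) : 0 < α j :=
    (hlamG0.symm.trans_lt (hlamG (by simp) (by grind) hj)).trans (hinterlace j hj hjm).1
  refine ⟨α, hzero, hexact, fun j hj hjm => ?_, hinterlace, fun j hj hjm lam hlow hupp => ?_⟩
  · exact (hinterlace j hj (by omega)).2.trans (hinterlace (j + 1) (by omega) hjm).1
  have hlam : 0 < lam := hlow.elim And.right fun ⟨_, hlt⟩ =>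
    (hα (j - 1) (by omega) (by omega)).trans hlt
  have hruns : signVar (fun k => (Amat π ν k lam).det) m + 1 = j :=
    signVar_add_one_eq_of_mem_Ioc hj hjm (hlow.imp And.left id) hupp
      fun i hi him => hsignVar i hi him lam
  exact hruns ▸ (hξ lam).isType hlam (fun i hi => hπ i (by grind)) hν hν0

theorem stmt8 (n : ℕ) (hn : 3 ≤ n) (π ν : ℕ → ℝ)
    (hπ : ∀ i ∈ Finset.Icc 1 n, 0 < π i)
    (hπ1 : ∑ i ∈ Finset.Icc 1 n, π i = 1)
    (hν : ∀ i ∈ Finset.Icc 1 (n - 1), 0 < ν i)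
    (hν0 : ν 0 = 0) (hνn : ν n = 0)
    -- the (simple) eigenvalues `0 = λ^G_0 < λ^G_1 < ⋯ < λ^G_{n−1}` of `M^G_{π,ν}`
    (lamG : ℕ → ℝ) (hlamG0 : lamG 0 = 0)
    (hlamGmono : ∀ j, j + 1 ≤ n - 1 → lamG j < lamG (j + 1))
    (hlamGeig : ∀ j, j ≤ n - 1 → ∃ ζ : ℕ → ℝ, IsEigen n π ν (lamG j) ζ)
    (hlamGall : ∀ (μ : ℝ) (ζ : ℕ → ℝ), IsEigen n π ν μ ζ → ∃ j ≤ n - 1, μ = lamG j)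
    -- the family `λ ↦ ξ_λ`
    (ξ : ℝ → ℕ → ℝ) (hξ : ∀ lam : ℝ, XiRec n π ν lam (ξ lam)) :
    ∃ α : ℕ → ℝ,
      -- `det A_{n−2}` has exactly the `n−2` distinct roots `α_1 < ⋯ < α_{n−2}`
      (∀ j, 1 ≤ j → j ≤ n - 2 → Matrix.det (Amat π ν (n - 2) (α j)) = 0) ∧
      (∀ x : ℝ, Matrix.det (Amat π ν (n - 2) x) = 0 →
        ∃ j, 1 ≤ j ∧ j ≤ n - 2 ∧ x = α j) ∧
      (∀ j, 1 ≤ j → j + 1 ≤ n - 2 → α j < α (j + 1)) ∧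
      -- (1) interlacing `λ^G_j < α_j < λ^G_{j+1}`
      (∀ j, 1 ≤ j → j ≤ n - 2 → lamG j < α j ∧ α j < lamG (j + 1)) ∧
      -- (2) `ξ_λ` is of type `j` for `λ ∈ (α_{j−1}, α_j]`, with `α_0 := 0`, `α_{n−1} := ∞`
      (∀ j, 1 ≤ j → j ≤ n - 1 → ∀ lam : ℝ,
        ((j = 1 ∧ 0 < lam) ∨ (2 ≤ j ∧ α (j - 1) < lam)) →
        (j = n - 1 ∨ lam ≤ α j) →
        IsType n (ξ lam) j) :=
  stmt8_general n (by omega) π ν hπ hν hν0 hνn lamG hlamG0 hlamGmono hlamGeig ξ hξ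
end
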